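/- arXiv:1406.5908 — 5 statements merged into one kernel-verified Lean document; each statement's English description precedes it below -/
import Mathlib

section
/- Let H be an inner product space (over ℝ or ℂ) and let ε > 0 satisfy (1+ε)² < 2, i.e. ε < √2 − 1. Then there is no map Φ: ℂ² → H such that ‖x−y‖₁/(1+ε) ≤ ‖Φ(x)−Φ(y)‖ ≤ ‖x−y‖₁ for all x,y ∈ ℂ², where ‖·‖₁ denotes the ℓ¹-norm on ℂ². (This witnesses that Hilbert space is B-convex with n = 2.) -/
theorem quad_ineq (𝕜 : Type*) [RCLike 𝕜] {H : Type*} [NormedAddCommGroup H]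
    [InnerProductSpace 𝕜 H] (p q r : H) :
    ‖p + q‖ ^ 2 + ‖q + r‖ ^ 2 ≤ ‖p‖ ^ 2 + ‖q‖ ^ 2 + ‖r‖ ^ 2 + ‖p + q + r‖ ^ 2 := by
  have h0 := sq_nonneg ‖p + r‖
  have h1 := norm_add_sq (𝕜 := 𝕜) p q
  have h2 := norm_add_sq (𝕜 := 𝕜) q r
  have h3 := norm_add_sq (𝕜 := 𝕜) (p + q) r
  have h4 := norm_add_sq (𝕜 := 𝕜) p r
  rw [inner_add_left, map_add] at h3
  linarith

/-- Hilbert space is B-convex with `n = 2`: if `H` is an inner product space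
(over `ℝ` or `ℂ`) and `0 < ε` satisfies `(1 + ε)² < 2`, then there is no map
`Φ : ℂ² → H` with `‖x - y‖₁ / (1 + ε) ≤ ‖Φ x - Φ y‖ ≤ ‖x - y‖₁` for all
`x, y ∈ ℂ²`, where `‖·‖₁` is the `ℓ¹`-norm on `ℂ²`. -/
theorem no_biLipschitz_ell1_into_innerProductSpace
    (𝕜 : Type*) [RCLike 𝕜] (H : Type*) [NormedAddCommGroup H] [InnerProductSpace 𝕜 H]
    (ε : ℝ) (hε : 0 < ε) (hε2 : (1 + ε) ^ 2 < 2) :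
    ¬ ∃ Φ : (Fin 2 → ℂ) → H, ∀ x y : Fin 2 → ℂ,
        (∑ i, ‖x i - y i‖) / (1 + ε) ≤ ‖Φ x - Φ y‖ ∧
        ‖Φ x - Φ y‖ ≤ ∑ i, ‖x i - y i‖ := by
  rintro ⟨Φ, h⟩
  have hpos : 0 < 1 + ε := by linarith
  have hab := (h ![1, 0] ![0, 0]).2
  have hbc := (h ![1, 1] ![1, 0]).2
  have hcd := (h ![0, 1] ![1, 1]).2
  have hda := (h ![0, 1] ![0, 0]).2
  have hac := (h ![1, 1] ![0, 0]).1
  have hbd := (h ![0, 1] ![1, 0]).1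
  have hq := quad_ineq 𝕜 (Φ ![1, 0] - Φ ![0, 0]) (Φ ![1, 1] - Φ ![1, 0])
    (Φ ![0, 1] - Φ ![1, 1])
  have e1 : (Φ ![1, 0] - Φ ![0, 0]) + (Φ ![1, 1] - Φ ![1, 0]) = Φ ![1, 1] - Φ ![0, 0] := by abel
  have e2 : (Φ ![1, 1] - Φ ![1, 0]) + (Φ ![0, 1] - Φ ![1, 1]) = Φ ![0, 1] - Φ ![1, 0] := by abel
  have e3 : (Φ ![1, 1] - Φ ![0, 0]) + (Φ ![0, 1] - Φ ![1, 1]) = Φ ![0, 1] - Φ ![0, 0] := by abel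
  rw [e1, e2, e3] at hq
  simp only [Fin.sum_univ_two, Matrix.cons_val_zero, Matrix.cons_val_one, sub_zero, sub_self,
    zero_sub, norm_neg, norm_one, norm_zero, add_zero, zero_add] at hab hbc hcd hda hac hbd
  have hside : ∀ v : H, ‖v‖ ≤ 1 → ‖v‖ ^ 2 ≤ 1 := fun v hv => pow_le_one₀ (norm_nonneg v) hv
  have hdiag : ∀ v : H, (1 + 1) / (1 + ε) ≤ ‖v‖ → 2 < ‖v‖ ^ 2 := by
    intro v hv
    have h1 : ((1 + 1) / (1 + ε)) ^ 2 ≤ ‖v‖ ^ 2 := pow_le_pow_left₀ (by positivity) hv 2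
    refine lt_of_lt_of_le ?_ h1
    rw [div_pow, lt_div_iff₀ (by positivity)]
    linarith
  linarith [hside _ hab, hside _ hbc, hside _ hcd, hside _ hda, hdiag _ hac, hdiag _ hbd]
end

section
/- Let G be a group acting on the right on a set X, and let (x_i)_{i≥0} be a sequence of pairwise distinct points of X that is rectifiable. Let B be a group generated by a sequence of elements b₁, b₂, …, let n: ℕ → ℕ be strictly increasing with n(1) ≥ 1, and let f: X → B be the function with f(x_{n(j)}) = b_j for all j ≥ 1 and f(x) = 1 for all other x ∈ X. Let W = ⟨G ∪ {f}⟩ be the subgroup of the unrestricted wreath product B^X ⋊ G generated by G and f. Then W contains ι(c) for every c in the commutator subgroup [B,B], where ι: B → B^X ⋊ G sends b ∈ B to the function X → B with value b at x₀ and value 1 elsewhere. -/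
/-- A right action of a group `G` on a set `X`. -/
structure RAct (G : Type*) (X : Type*) [Group G] where
  act : X → G → X
  act_one : ∀ x, act x 1 = x
  act_mul : ∀ x g h, act (act x g) h = act x (g * h)

namespace RAct

variable {G X : Type*} [Group G]

/-- The automorphism of `B ^ X` induced by `g : G`, `φ ↦ φ(· g)`. -/
def autFun {B : Type*} [Group B] (A : RAct G X) (g : G) : MulAut (X → B) where
  toFun φ := fun x => φ (A.act x g)
  invFun φ := fun x => φ (A.act x g⁻¹)
  left_inv φ := funext fun x => by
    show φ (A.act (A.act x g⁻¹) g) = φ x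
    rw [A.act_mul, inv_mul_cancel, A.act_one]
  right_inv φ := funext fun x => by
    show φ (A.act (A.act x g) g⁻¹) = φ x
    rw [A.act_mul, mul_inv_cancel, A.act_one]
  map_mul' φ ψ := rfl

/-- The action of `G` on the unrestricted product `B ^ X` by translation of the
argument, as a homomorphism `G →* MulAut (X → B)`.  With this action, for
`φ : X → B` and `g : G` the conjugate `g⁻¹ φ g` in `B^X ⋊ G` is `φ(· g⁻¹)`,
i.e. `(φ · g)(x) = φ (x g⁻¹)`. -/
def wreathAut (A : RAct G X) (B : Type*) [Group B] : G →* MulAut (X → B) where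
  toFun := A.autFun
  map_one' := by
    ext φ x
    simp [autFun, A.act_one]
  map_mul' g h := by
    ext φ x
    simp [autFun, A.act_mul]

end RAct

/-- The unrestricted permutational wreath product `B ^ X ⋊ G` associated to a
right action of `G` on `X`. -/
abbrev UWreath {G X : Type*} [Group G] (A : RAct G X) (B : Type*) [Group B] :=
  (X → B) ⋊[A.wreathAut B] G

open scoped commutatorElement

open SemidirectProduct in
/-- Let `G` act on the right on `X`, let `(x i)` be a rectifiable sequence of
pairwise distinct points of `X`, let `B` be generated by `b₁, b₂, …`, let
`n : ℕ → ℕ` be strictly increasing with `n 1 ≥ 1`, and let `f : X → B` take the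
value `b j` at `x (n j)` for `j ≥ 1` and the value `1` elsewhere.  Then the
subgroup `W = ⟨G ∪ {f}⟩` of the unrestricted wreath product `B^X ⋊ G` contains
`ι c` for every `c ∈ [B, B]`, where `ι b` is the function with value `b` at
`x 0` and `1` elsewhere. -/
theorem commutator_subgroup_in_W
    (G X B : Type) [Group G] [Group B] [DecidableEq X]
    (A : RAct G X)
    (x : ℕ → X) (hdist : Function.Injective x)
    (hrect : ∀ i j : ℕ, ∃ g : G, A.act (x i) g = x j ∧
      ∀ k l : ℕ, k ≠ i → k ≠ l → A.act (x k) g ≠ x l)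
    (b : ℕ → B)
    (hgen : Subgroup.closure {c : B | ∃ j : ℕ, 1 ≤ j ∧ c = b j} = ⊤)
    (n : ℕ → ℕ) (hn : StrictMono n) (hn1 : 1 ≤ n 1)
    (f : X → B)
    (hf1 : ∀ j : ℕ, 1 ≤ j → f (x (n j)) = b j)
    (hf2 : ∀ p : X, (∀ j : ℕ, 1 ≤ j → p ≠ x (n j)) → f p = 1)
    (c : B) (hc : c ∈ commutator B) :
    (inl (fun p => if p = x 0 then c else 1) : UWreath A B) ∈
      Subgroup.closure
        (Set.range (inr : G →* UWreath A B) ∪ {(inl f : UWreath A B)}) := by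
  set W := Subgroup.closure
        (Set.range (inr : G →* UWreath A B) ∪ {(inl f : UWreath A B)}) with hW
  let S : Subgroup (X → B) := W.comap (inl : (X → B) →* UWreath A B)
  have hSf : f ∈ S := by
    change (inl f : UWreath A B) ∈ W
    exact Subgroup.subset_closure (Or.inr rfl)
  have hSt : ∀ (g : G) (φ : X → B), φ ∈ S → (fun p => φ (A.act p g)) ∈ S := by
    intro g φ hφ
    change (inl (fun p => φ (A.act p g)) : UWreath A B) ∈ W
    have h1 : (inl (fun p => φ (A.act p g)) : UWreath A B)
        = inr g * inl φ * inr g⁻¹ := by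
      rw [← inl_aut]
      rfl
    rw [h1]
    have hr : ∀ g : G, (inr g : UWreath A B) ∈ W := fun g =>
      Subgroup.subset_closure (Or.inl ⟨g, rfl⟩)
    exact W.mul_mem (W.mul_mem (hr g) hφ) (hr _)
  have hact : ∀ (p q : X) (g : G), A.act p g = q ↔ p = A.act q g⁻¹ := by
    intro p q g
    constructor
    · rintro rfl
      rw [A.act_mul, mul_inv_cancel, A.act_one]
    · rintro rfl
      rw [A.act_mul, inv_mul_cancel, A.act_one]
  let K : Subgroup B := S.comap (MonoidHom.mulSingle (fun _ : X => B) (x 0))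
  have hK : ∀ d : B, d ∈ K ↔ (Pi.mulSingle (x 0) d : X → B) ∈ S := fun d => Iff.rfl
  have hnorm : ∀ y : B, y ∈ Subgroup.normalizer (K : Set B) := by
    have : Subgroup.closure {c : B | ∃ j : ℕ, 1 ≤ j ∧ c = b j}
        ≤ Subgroup.normalizer (K : Set B) := by
      rw [Subgroup.closure_le]
      rintro _ ⟨j, hj, rfl⟩
      obtain ⟨g, hg, -⟩ := hrect 0 (n j)
      have hF := hSt g f hSf
      set F : X → B := fun p => f (A.act p g) with hFdef
      have hF0 : F (x 0) = b j := by
        rw [hFdef]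
        simp only [hg, hf1 j hj]
      have hconj : ∀ d : B, (Pi.mulSingle (x 0) (b j * d * (b j)⁻¹) : X → B)
          = F * Pi.mulSingle (x 0) d * F⁻¹ := by
        intro d
        funext p
        by_cases hp : p = x 0
        · subst hp
          simp [hF0]
        · simp [Pi.mulSingle_eq_of_ne hp]
      rw [SetLike.mem_coe, Subgroup.mem_normalizer_iff]
      intro d
      rw [hK, hK, hconj,
        Subgroup.mul_mem_cancel_right _ (S.inv_mem hF), Subgroup.mul_mem_cancel_left _ hF]
    intro y
    apply this
    rw [hgen]
    trivial
  have hKn : K.Normal := by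
    constructor
    intro d hd y
    exact (Subgroup.mem_normalizer_iff.1 (hnorm y) d).1 hd
  have hcomm : ∀ i j : ℕ, 1 ≤ i → 1 ≤ j → ⁅b i, b j⁆ ∈ K := by
    intro i j hi hj
    obtain ⟨g, hg, hg2⟩ := hrect (n j) (n i)
    obtain ⟨h, hh, -⟩ := hrect 0 (n j)
    have hF := hSt g f hSf
    set F : X → B := fun p => f (A.act p g) with hFdef
    have hFj : F (x (n j)) = b i := by
      simp only [hFdef, hg, hf1 i hi]
    have hC : F * f * F⁻¹ * f⁻¹ ∈ S :=
      S.mul_mem (S.mul_mem (S.mul_mem hF hSf) (S.inv_mem hF)) (S.inv_mem hSf)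
    have hCe : F * f * F⁻¹ * f⁻¹ = Pi.mulSingle (x (n j)) ⁅b i, b j⁆ := by
      funext p
      by_cases hp : p = x (n j)
      · subst hp
        simp [hFj, hf1 j hj, commutatorElement_def]
      · rw [Pi.mulSingle_eq_of_ne hp]
        simp only [Pi.mul_apply, Pi.inv_apply]
        by_cases h1 : ∀ k : ℕ, 1 ≤ k → p ≠ x (n k)
        · simp [hf2 p h1]
        · by_cases h2 : ∀ l : ℕ, 1 ≤ l → A.act p g ≠ x (n l)
          · simp [hFdef, hf2 _ h2]
          · push Not at h1 h2
            obtain ⟨k, hk, rfl⟩ := h1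
            obtain ⟨l, hl, hkl⟩ := h2
            have hkj : n k ≠ n j := fun e => hp (by rw [e])
            have : n k = n l := by
              by_contra hne
              exact hg2 (n k) (n l) hkj hne hkl
            have hFk : F (x (n k)) = f (x (n k)) := by
              simp only [hFdef]
              rw [hkl, this]
            rw [hFk]
            simp
    rw [hCe] at hC
    have h3 := hSt h _ hC
    rw [hK]
    convert h3 using 1
    funext p
    have : p = x 0 ↔ A.act p h = x (n j) := by
      rw [hact p, ← hh, A.act_mul, mul_inv_cancel, A.act_one]
    simp only [Pi.mulSingle_apply, this]
  have key : ∀ y : B, (∀ j, 1 ≤ j → ⁅y, b j⁆ ∈ K) → ∀ z, ⁅y, z⁆ ∈ K := by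
    intro y hy z
    have hq : ∀ z, ⁅y, z⁆ ∈ K ↔
        z ∈ (Subgroup.centralizer {(QuotientGroup.mk' K) y}).comap (QuotientGroup.mk' K) := by
      intro z
      change _ ↔ QuotientGroup.mk' K z ∈ Subgroup.centralizer _
      rw [Subgroup.mem_centralizer_singleton_iff,
        ← QuotientGroup.eq_one_iff, ← QuotientGroup.mk'_apply, map_commutatorElement,
        commutatorElement_eq_one_iff_mul_comm]
      exact eq_comm
    rw [hq]
    have : Subgroup.closure {c : B | ∃ j : ℕ, 1 ≤ j ∧ c = b j} ≤
        (Subgroup.centralizer {(QuotientGroup.mk' K) y}).comap (QuotientGroup.mk' K) := by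
      rw [Subgroup.closure_le]
      rintro _ ⟨j, hj, rfl⟩
      exact (hq _).1 (hy j hj)
    apply this
    rw [hgen]
    trivial
  have hle : commutator B ≤ K := by
    rw [commutator_def, Subgroup.commutator_le]
    intro y _ z _
    refine key y (fun j hj => ?_) z
    rw [← commutatorElement_inv]
    exact K.inv_mem (key (b j) (fun i hi => hcomm j i hj hi) y)
  have hfin := (hK c).1 (hle hc)
  have he : (fun p => if p = x 0 then c else 1) = (Pi.mulSingle (x 0) c : X → B) := by
    funext p
    rw [Pi.mulSingle_apply]
  rw [he]
  exact hfin
end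

section
/- Let G be a finite group with a generating set S of cardinality d. Then there exist a finite group H with a generating set T of cardinality d+1 and an injective group homomorphism ι: G → H whose image is contained in the commutator subgroup [H,H], such that 2‖g‖_S ≤ ‖ι(g)‖_perfect ≤ 4‖g‖_S for all g ∈ G, where ‖·‖_perfect is the perfect norm on [H,H] with respect to T and ‖·‖_S is the word norm on G. -/
/-- The word norm of `g` with respect to `S`: the least length of an expression
of `g` as a product of elements of `S ∪ S⁻¹`. -/
noncomputable def wordNorm {G : Type*} [Group G] (S : Set G) (g : G) : ℕ :=
  sInf {n | ∃ l : List G, (∀ x ∈ l, x ∈ S ∨ x⁻¹ ∈ S) ∧ l.length = n ∧ l.prod = g}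

/-- The perfect norm of `h` with respect to the generating set `T`: the least
length of a balanced word (i.e. a word lying in the commutator subgroup of the
free group `F_T`) representing `h`. -/
noncomputable def perfectNorm {H : Type*} [Group H] (T : Set H) (h : H) : ℕ :=
  sInf {n | ∃ L : List (T × Bool),
    FreeGroup.mk L ∈ commutator (FreeGroup T) ∧
    L.length = n ∧
    FreeGroup.lift (fun t : T => (t : H)) (FreeGroup.mk L) = h}

namespace ImbedAux

section transfer

theorem transfer {G W I : Type} [Group G] [Group W] [Finite W] [Fintype I]
    (S : Set G) (γ : I → W) (hγ : Function.Injective γ)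
    (ι : G →* W) (hι : Function.Injective ι)
    (up : ∀ g, ∃ L : List (I × Bool), FreeGroup.mk L ∈ commutator (FreeGroup I) ∧
      L.length = 4 * wordNorm S g ∧ FreeGroup.lift γ (FreeGroup.mk L) = ι g)
    (low : ∀ g, ∀ L : List (I × Bool), FreeGroup.lift γ (FreeGroup.mk L) = ι g →
      2 * wordNorm S g ≤ L.length) :
    ∃ (H : Type) (_ : Group H) (_ : Fintype H) (T : Finset H),
      T.card = Fintype.card I ∧
      Subgroup.closure (T : Set H) = ⊤ ∧
      ∃ ι : G →* H, Function.Injective ι ∧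
        (∀ g : G, ι g ∈ commutator H) ∧
        ∀ g : G, 2 * wordNorm S g ≤ perfectNorm (T : Set H) (ι g) ∧
          perfectNorm (T : Set H) (ι g) ≤ 4 * wordNorm S g := by
  classical
  let R : Subgroup W := (FreeGroup.lift γ).range
  have hR : ∀ g, ι g ∈ R := fun g => by
    obtain ⟨L, _, _, h⟩ := up g
    exact ⟨_, h⟩
  let γ' : I → R := fun i => ⟨γ i, FreeGroup.of i, by simp⟩
  have hγ' : Function.Injective γ' := fun i j h => hγ (congrArg Subtype.val h)
  let ι' : G →* R := ι.codRestrict R hR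
  have hsub : ∀ x : FreeGroup I, R.subtype (FreeGroup.lift γ' x) = FreeGroup.lift γ x := by
    intro x
    have : R.subtype.comp (FreeGroup.lift γ') = FreeGroup.lift γ := by
      ext i; simp [γ']
    rw [← this]; rfl
  have hiff : ∀ (x : FreeGroup I) g, FreeGroup.lift γ' x = ι' g ↔ FreeGroup.lift γ x = ι g := by
    intro x g
    rw [← hsub, Subtype.ext_iff]; rfl
  let T : Finset R := Finset.univ.image γ'
  have hT : ∀ i, γ' i ∈ (T : Set R) := fun i => by simp [T]
  let e : I ≃ (T : Set R) := Equiv.ofBijective (fun i => ⟨γ' i, hT i⟩)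
    ⟨fun i j h => hγ' (congrArg Subtype.val h), fun ⟨x, hx⟩ => by
      simp only [T, Finset.coe_image, Finset.coe_univ, Set.image_univ, Set.mem_range] at hx
      obtain ⟨i, rfl⟩ := hx
      exact ⟨i, rfl⟩⟩
  have hlift : ∀ x : FreeGroup I,
      FreeGroup.lift (fun t : (T : Set R) => (t : R)) (FreeGroup.map e x) = FreeGroup.lift γ' x := by
    intro x
    have : (FreeGroup.lift (fun t : (T : Set R) => (t : R))).comp (FreeGroup.map e)
      = FreeGroup.lift γ' := by
      ext i; simp only [MonoidHom.comp_apply, FreeGroup.map.of, FreeGroup.lift_apply_of]; rfl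
    rw [← this]; rfl
  have key : ∀ g, ∃ L : List (Prod (T : Set R) Bool),
      FreeGroup.mk L ∈ commutator (FreeGroup (T : Set R)) ∧ L.length = 4 * wordNorm S g ∧
      FreeGroup.lift (fun t : (T : Set R) => (t : R)) (FreeGroup.mk L) = ι' g := by
    intro g
    obtain ⟨L, h1, h2, h3⟩ := up g
    refine ⟨L.map fun x => (e x.1, x.2), ?_, by simpa using h2, ?_⟩
    · rw [← FreeGroup.map.mk]
      have := Subgroup.mem_map_of_mem (FreeGroup.map e) h1
      rw [commutator_def, Subgroup.map_commutator] at this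
      exact Subgroup.commutator_mono le_top le_top this
    · rw [← FreeGroup.map.mk, hlift, hiff, h3]
  refine ⟨R, inferInstance, Fintype.ofFinite _, T, ?_, ?_, ι', ?_, ?_, ?_⟩
  · rw [Finset.card_image_of_injective _ hγ', Finset.card_univ]
  · rw [eq_top_iff]
    rintro ⟨x, y, rfl⟩ -
    have : (⟨FreeGroup.lift γ y, y, rfl⟩ : R) = FreeGroup.lift γ' y := by
      apply Subtype.ext; exact (hsub y).symm
    rw [this]
    have h2 : (FreeGroup.lift γ').range ≤ Subgroup.closure (T : Set R) := by
      rw [FreeGroup.range_lift_eq_closure]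
      apply Subgroup.closure_mono
      rintro _ ⟨i, rfl⟩; exact hT i
    exact h2 ⟨y, rfl⟩
  · intro a b h
    exact hι (congrArg Subtype.val h)
  · intro g
    obtain ⟨L, h1, -, h3⟩ := key g
    rw [← h3]
    have := Subgroup.mem_map_of_mem (FreeGroup.lift (fun t : (T : Set R) => (t : R))) h1
    rw [commutator_def, Subgroup.map_commutator] at this
    exact Subgroup.commutator_mono le_top le_top this
  · intro g
    constructor
    · apply le_csInf
      · obtain ⟨L, h⟩ := key g
        exact ⟨_, L, h.1, rfl, h.2.2⟩
      · rintro _ ⟨L, h1, rfl, h3⟩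
        have := low g (L.map fun x => (e.symm x.1, x.2)) (by
          rw [← hiff, ← hlift, FreeGroup.map.mk, ← h3]
          congr 2
          rw [List.map_map]
          conv_rhs => rw [← List.map_id L]
          apply List.map_congr_left
          rintro ⟨a, b⟩ _
          simp only [Function.comp_apply, Equiv.apply_symm_apply, id_eq])
        simpa using this
    · obtain ⟨L, h⟩ := key g
      exact Nat.sInf_le ⟨L, h⟩

end transfer

section constr

variable {G : Type} [Group G] (ℓ n : ℕ) [NeZero ℓ] [NeZero n]

/-- The cocycle `s ^ ⌊k / ℓ⌋`. -/
def cc (s : G) (k : ZMod (ℓ * n)) : G := s ^ ((k.val : ℤ) / ℓ)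

theorem cc_int (hn : ∀ g : G, g ^ n = 1) (s : G) (z : ℤ) :
    cc ℓ n s (z : ZMod (ℓ * n)) = s ^ (z / (ℓ : ℤ)) := by
  unfold cc
  rw [ZMod.val_intCast]
  have hl : (ℓ : ℤ) ≠ 0 := by exact_mod_cast NeZero.ne ℓ
  have h : z / (ℓ : ℤ) = (z % ((ℓ * n : ℕ) : ℤ)) / ℓ + n * (z / ((ℓ * n : ℕ) : ℤ)) := by
    conv_lhs => rw [← Int.emod_add_mul_ediv z ((ℓ * n : ℕ) : ℤ)]
    push_cast
    rw [mul_assoc, Int.add_mul_ediv_left _ _ hl]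
  rw [h, zpow_add, zpow_mul, zpow_natCast, hn, one_zpow, mul_one]

/-- The generator attached to `s`. -/
def ff (s : G) : Equiv.Perm (G × ZMod (ℓ * n)) where
  toFun x := (cc ℓ n s x.2 * x.1, x.2)
  invFun x := ((cc ℓ n s x.2)⁻¹ * x.1, x.2)
  left_inv x := by simp
  right_inv x := by simp

/-- The shift. -/
def tt : Equiv.Perm (G × ZMod (ℓ * n)) where
  toFun x := (x.1, x.2 + 1)
  invFun x := (x.1, x.2 - 1)
  left_inv x := by simp
  right_inv x := by simp

open Classical in
/-- The value of the imbedding at a coordinate. -/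
noncomputable def vv (g : G) (k : ZMod (ℓ * n)) : G := if (ℓ : ℤ) ∣ (k.val : ℤ) then g else 1

theorem vv_int (g : G) (z : ℤ) [Decidable ((ℓ : ℤ) ∣ z)] :
    vv ℓ n g (z : ZMod (ℓ * n)) = if (ℓ : ℤ) ∣ z then g else 1 := by
  unfold vv
  have : (ℓ : ℤ) ∣ (((z : ZMod (ℓ * n)).val : ℕ) : ℤ) ↔ (ℓ : ℤ) ∣ z := by
    rw [ZMod.val_intCast]
    have hd : (ℓ : ℤ) ∣ ((ℓ * n : ℕ) : ℤ) := by push_cast; exact dvd_mul_right _ _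
    rw [Int.dvd_iff_emod_eq_zero, Int.dvd_iff_emod_eq_zero, Int.emod_emod_of_dvd _ hd]
  simp only [this]

/-- The imbedding. -/
noncomputable def emb : G →* Equiv.Perm (G × ZMod (ℓ * n)) where
  toFun g :=
    { toFun := fun x => (vv ℓ n g x.2 * x.1, x.2)
      invFun := fun x => ((vv ℓ n g x.2)⁻¹ * x.1, x.2)
      left_inv := fun x => by simp
      right_inv := fun x => by simp }
  map_one' := by ext x <;> simp [vv]
  map_mul' a b := by
    ext x
    · by_cases h : (ℓ : ℤ) ∣ (x.2.val : ℤ) <;>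
        simp only [vv, h, if_true, if_false, Equiv.coe_fn_mk, Equiv.Perm.mul_apply, mul_assoc, one_mul]
    · rfl

theorem emb_apply (g : G) (x) : emb ℓ n g x = (vv ℓ n g x.2 * x.1, x.2) := rfl

theorem emb_inj : Function.Injective (emb (G := G) ℓ n) := by
  intro a b h
  have := congrArg (fun f => (f ((1 : G), (0 : ZMod (ℓ * n)))).1) h
  simpa [emb_apply, vv] using this

theorem comm_eq (hn : ∀ g : G, g ^ n = 1) (s : G) :
    ff ℓ n s * tt ℓ n * (ff ℓ n s)⁻¹ * (tt ℓ n)⁻¹ = emb ℓ n s := by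
  apply Equiv.ext
  rintro ⟨x, k⟩
  obtain ⟨z, rfl⟩ := ZMod.intCast_surjective k
  have h1 : (tt ℓ n)⁻¹ (x, (z : ZMod (ℓ * n))) = (x, ((z - 1 : ℤ) : ZMod (ℓ * n))) := by
    rw [Int.cast_sub, Int.cast_one]; rfl
  have h2 : ∀ y k, (ff ℓ n s)⁻¹ (y, k) = ((cc ℓ n s k)⁻¹ * y, k) := fun _ _ => rfl
  have h3 : ∀ (y : G) k, tt ℓ n (y, k) = (y, k + 1) := fun _ _ => rfl
  have h4 : ∀ y k, (ff ℓ n s) (y, k) = ((cc ℓ n s k) * y, k) := fun _ _ => rfl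
  classical
  simp only [Equiv.Perm.mul_apply, h1, h2, h3, h4, emb_apply]
  have h5 : ((z - 1 : ℤ) : ZMod (ℓ * n)) + 1 = (z : ZMod (ℓ * n)) := by push_cast; ring
  rw [h5, vv_int, cc_int _ _ hn, cc_int _ _ hn, ← mul_assoc, ← zpow_neg, ← zpow_add]
  congr 2
  have hl : (0 : ℤ) < ℓ := by exact_mod_cast NeZero.pos ℓ
  split_ifs with h
  · obtain ⟨w, rfl⟩ := h
    have a1 : (ℓ : ℤ) * w / ℓ = w := Int.mul_ediv_cancel_left _ hl.ne'
    have a2 : ((ℓ : ℤ) * w - 1) / ℓ = w - 1 := by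
      rw [Int.ediv_eq_iff_of_pos hl] <;> constructor <;> nlinarith
    rw [a1, a2]; simp
  · have a2 : (z - 1) / (ℓ : ℤ) = z / ℓ := by
      have b1 := Int.emod_add_mul_ediv z ℓ
      have b2 := Int.emod_lt_of_pos z hl
      have b3 := Int.emod_nonneg z hl.ne'
      have b4 : z % ℓ ≠ 0 := fun h0 => h (Int.dvd_of_emod_eq_zero h0)
      have b5 : 1 ≤ z % ℓ := by omega
      rw [Int.ediv_eq_iff_of_pos hl] <;> constructor <;> nlinarith
    rw [a2]; simp

/-- The generators. -/
def gm (S : Finset G) : Option S → Equiv.Perm (G × ZMod (ℓ * n))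
  | none => tt ℓ n
  | some s => ff ℓ n (s : G)

theorem gm_inj (hn : ∀ g : G, g ^ n = 1) (h2 : 2 ≤ n) (S : Finset G) :
    Function.Injective (gm ℓ n S) := by
  have hl : 1 ≤ ℓ := NeZero.pos ℓ
  have : Fact (1 < ℓ * n) := ⟨by nlinarith⟩
  have hne : ∀ s : G, tt ℓ n ≠ ff ℓ n s := by
    intro s h
    have := congrArg (fun f => (f ((1 : G), (0 : ZMod (ℓ * n)))).2) h
    simp [tt, ff] at this
  rintro (_ | s) (_ | s') h
  · rfl
  · exact (hne _ h).elim
  · exact (hne _ h.symm).elim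
  · have := congrArg (fun f => (f ((1 : G), ((ℓ : ℤ) : ZMod (ℓ * n)))).1) h
    have hl' : (ℓ : ℤ) ≠ 0 := by exact_mod_cast NeZero.ne ℓ
    simp only [gm, ff, Equiv.coe_fn_mk, cc_int _ _ hn, Int.ediv_self hl', zpow_one, mul_one] at this
    rw [Subtype.ext this]

theorem low_aux (hn : ∀ g : G, g ^ n = 1) (S : Finset G) (L : List (Option S × Bool)) :
    L.length < ℓ → ∃ (p : ℤ) (lA lB : List G),
      |p| + lA.length + lB.length ≤ L.length ∧
      (∀ x ∈ lA, x ∈ (S : Set G) ∨ x⁻¹ ∈ (S : Set G)) ∧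
      (∀ x ∈ lB, x ∈ (S : Set G) ∨ x⁻¹ ∈ (S : Set G)) ∧
      FreeGroup.lift (gm ℓ n S) (FreeGroup.mk L) (1, ((0 : ℤ) : ZMod (ℓ * n)))
        = (lA.prod, ((0 + p : ℤ) : ZMod (ℓ * n))) ∧
      FreeGroup.lift (gm ℓ n S) (FreeGroup.mk L) (1, ((ℓ : ℤ) : ZMod (ℓ * n)))
        = (lB.prod, ((ℓ + p : ℤ) : ZMod (ℓ * n))) := by
  induction L with
  | nil => intro _; exact ⟨0, [], [], by simp, by simp, by simp, by simp, by simp⟩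
  | cons a L ih =>
    intro hlen
    rw [List.length_cons] at hlen
    obtain ⟨p, lA, lB, h1, hA, hB, h2, h3⟩ := ih (by omega)
    have hl : (0 : ℤ) < ℓ := by exact_mod_cast NeZero.pos ℓ
    have hp : |p| < ℓ := by omega
    rw [abs_lt] at hp
    have hcons : ∀ x, FreeGroup.lift (gm ℓ n S) (FreeGroup.mk (a :: L)) x =
        (cond a.2 (gm ℓ n S a.1) (gm ℓ n S a.1)⁻¹)
          (FreeGroup.lift (gm ℓ n S) (FreeGroup.mk L) x) := by
      intro x
      simp only [FreeGroup.lift_mk, List.map_cons, List.prod_cons, Equiv.Perm.mul_apply]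
    simp only [hcons, h2, h3]
    clear hcons h2 h3
    obtain ⟨_ | s, b⟩ := a
    · have t1 : ∀ (y : G) (z : ℤ), tt ℓ n (y, (z : ZMod (ℓ * n))) = (y, ((z + 1 : ℤ) : ZMod (ℓ * n))) := by
        intro y z; rw [Int.cast_add, Int.cast_one]; rfl
      have t2 : ∀ (y : G) (z : ℤ), (tt ℓ n)⁻¹ (y, (z : ZMod (ℓ * n))) = (y, ((z - 1 : ℤ) : ZMod (ℓ * n))) := by
        intro y z; rw [Int.cast_sub, Int.cast_one]; rfl
      cases b
      · refine ⟨p - 1, lA, lB, ?_, hA, hB, ?_, ?_⟩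
        · have := abs_sub p 1
          simp only [List.length_cons]; push_cast; simp at this; omega
        · simp only [cond_false, gm, t2]; congr 2; ring
        · simp only [cond_false, gm, t2]; congr 2; ring
      · refine ⟨p + 1, lA, lB, ?_, hA, hB, ?_, ?_⟩
        · have := abs_add_le p 1
          simp only [List.length_cons]; push_cast; simp at this; omega
        · simp only [cond_true, gm, t1]; congr 2; ring
        · simp only [cond_true, gm, t1]; congr 2; ring
    · have hact : ∀ (y : G) (z : ℤ),
          (cond b (gm ℓ n S (some s)) (gm ℓ n S (some s))⁻¹) (y, (z : ZMod (ℓ * n)))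
          = ((cond b (s : G) (s : G)⁻¹) ^ (z / (ℓ : ℤ)) * y, (z : ZMod (ℓ * n))) := by
        intro y z
        rw [← cc_int ℓ n hn]
        cases b
        · have : cc ℓ n (s : G)⁻¹ (z : ZMod (ℓ * n)) = (cc ℓ n (s : G) (z : ZMod (ℓ * n)))⁻¹ := by
            simp [cc]
          simp only [cond_false, this]; rfl
        · rfl
      simp only [hact]
      set u : G := cond b (s : G) (s : G)⁻¹ with hu
      have huS : u ∈ (S : Set G) ∨ u⁻¹ ∈ (S : Set G) := by
        cases b <;> simp [hu]
      have huS' : u⁻¹ ∈ (S : Set G) ∨ u⁻¹⁻¹ ∈ (S : Set G) := by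
        rw [inv_inv]; exact huS.symm
      by_cases h0 : 0 ≤ p
      · refine ⟨p, lA, u :: lB, ?_, hA, ?_, ?_, ?_⟩
        · simp only [List.length_cons]; push_cast; omega
        · simpa using ⟨huS, hB⟩
        · have : (0 + p) / (ℓ : ℤ) = 0 := by
            rw [Int.ediv_eq_iff_of_pos hl] <;> constructor <;> linarith
          rw [this]; simp
        · have : (ℓ + p) / (ℓ : ℤ) = 1 := by
            rw [Int.ediv_eq_iff_of_pos hl] <;> constructor <;> linarith
          rw [this]; simp
      · push Not at h0
        refine ⟨p, u⁻¹ :: lA, lB, ?_, ?_, hB, ?_, ?_⟩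
        · simp only [List.length_cons]; push_cast; omega
        · simpa using ⟨huS.symm, hA⟩
        · have : (0 + p) / (ℓ : ℤ) = -1 := by
            rw [Int.ediv_eq_iff_of_pos hl] <;> constructor <;> linarith
          rw [this]; simp
        · have : (ℓ + p) / (ℓ : ℤ) = 0 := by
            rw [Int.ediv_eq_iff_of_pos hl] <;> constructor <;> linarith
          rw [this]; simp

theorem up_aux (hn : ∀ g : G, g ^ n = 1) (S : Finset G) (l : List G)
    (hl : ∀ x ∈ l, x ∈ (S : Set G) ∨ x⁻¹ ∈ (S : Set G)) :
    ∃ L : List (Option S × Bool), FreeGroup.mk L ∈ commutator (FreeGroup (Option S)) ∧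
      L.length = 4 * l.length ∧ FreeGroup.lift (gm ℓ n S) (FreeGroup.mk L) = emb ℓ n l.prod := by
  induction l with
  | nil => exact ⟨[], by rw [← FreeGroup.one_eq_mk]; exact one_mem _, by simp, by simp⟩
  | cons x l ih =>
    obtain ⟨L, h1, h2, h3⟩ := ih fun y hy => hl y (List.mem_cons_of_mem _ hy)
    have hcm : ∀ a b : FreeGroup (Option S), a * b * a⁻¹ * b⁻¹ ∈ commutator (FreeGroup (Option S)) := by
      intro a b
      exact Subgroup.commutator_mem_commutator (Subgroup.mem_top a) (Subgroup.mem_top b)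
    suffices h : ∃ M : List (Option S × Bool), FreeGroup.mk M ∈ commutator (FreeGroup (Option S)) ∧
      M.length = 4 ∧ FreeGroup.lift (gm ℓ n S) (FreeGroup.mk M) = emb ℓ n x by
      obtain ⟨M, m1, m2, m3⟩ := h
      refine ⟨M ++ L, ?_, ?_, ?_⟩
      · rw [← FreeGroup.mul_mk]; exact mul_mem m1 h1
      · simp [m2, h2]; ring
      · rw [← FreeGroup.mul_mk, map_mul, m3, h3, List.prod_cons, map_mul]
    rcases hl x (by simp) with hx | hx
    · refine ⟨[(some ⟨x, hx⟩, true), (none, true), (some ⟨x, hx⟩, false), (none, false)], ?_, rfl, ?_⟩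
      · exact hcm (FreeGroup.of (some ⟨x, hx⟩)) (FreeGroup.of none)
      · rw [← comm_eq ℓ n hn]
        simp [gm, mul_assoc]
    · refine ⟨[(none, true), (some ⟨x⁻¹, hx⟩, true), (none, false), (some ⟨x⁻¹, hx⟩, false)], ?_, rfl, ?_⟩
      · exact hcm (FreeGroup.of none) (FreeGroup.of (some ⟨x⁻¹, hx⟩))
      · rw [← inv_inj, ← map_inv (emb ℓ n) x, ← comm_eq ℓ n hn]
        simp [gm, mul_assoc]

end constr

theorem exists_word {G : Type} [Group G] [Finite G] (S : Set G)
    (hgen : Subgroup.closure S = ⊤) (g : G) :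
    ∃ l : List G, (∀ x ∈ l, x ∈ S ∨ x⁻¹ ∈ S) ∧ l.length = wordNorm S g ∧ l.prod = g := by
  have : {n | ∃ l : List G, (∀ x ∈ l, x ∈ S ∨ x⁻¹ ∈ S) ∧ l.length = n ∧ l.prod = g}.Nonempty := by
    have hg : g ∈ (Subgroup.closure S).toSubmonoid := by rw [hgen]; trivial
    rw [Subgroup.closure_toSubmonoid] at hg
    obtain ⟨l, h1, h2⟩ := Submonoid.exists_list_of_mem_closure hg
    exact ⟨_, l, h1, rfl, h2⟩
  exact Nat.sInf_mem this

end ImbedAux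

/-- Imbedding a finite group in the derived subgroup of a finite group with one
more generator: if `G` is a finite group with a generating set `S` of
cardinality `d`, then there are a finite group `H` with a generating set `T` of
cardinality `d + 1` and an imbedding `ι : G → [H, H]` satisfying
`2 ‖g‖_S ≤ ‖ι g‖_perfect ≤ 4 ‖g‖_S`. -/
theorem imbed_in_derived_subgroup
    (G : Type) [Group G] [Fintype G] (d : ℕ) (S : Finset G)
    (hcard : S.card = d) (hgen : Subgroup.closure (S : Set G) = ⊤) :
    ∃ (H : Type) (_ : Group H) (_ : Fintype H) (T : Finset H),
      T.card = d + 1 ∧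
      Subgroup.closure (T : Set H) = ⊤ ∧
      ∃ ι : G →* H, Function.Injective ι ∧
        (∀ g : G, ι g ∈ commutator H) ∧
        ∀ g : G, 2 * wordNorm (S : Set G) g ≤ perfectNorm (T : Set H) (ι g) ∧
          perfectNorm (T : Set H) (ι g) ≤ 4 * wordNorm (S : Set G) g := by
  classical
  let ℓ : ℕ := 2 * (∑ g : G, wordNorm (S : Set G) g) + 1
  let n : ℕ := 2 * Fintype.card G
  have : NeZero ℓ := ⟨by simp [ℓ]⟩
  have hc : 0 < Fintype.card G := Fintype.card_pos
  have : NeZero n := ⟨by simp [n]⟩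
  have hn : ∀ g : G, g ^ n = 1 := fun g => by
    simp only [n]; rw [mul_comm, pow_mul, pow_card_eq_one, one_pow]
  have hI : d + 1 = Fintype.card (Option S) := by simp [hcard]
  rw [hI]
  refine ImbedAux.transfer (S : Set G) (ImbedAux.gm ℓ n S)
    (ImbedAux.gm_inj ℓ n hn (by simp only [n]; omega) S) (ImbedAux.emb ℓ n) (ImbedAux.emb_inj ℓ n) ?_ ?_
  · intro g
    obtain ⟨l, h1, h2, h3⟩ := ImbedAux.exists_word (S : Set G) hgen g
    obtain ⟨L, a, b, c⟩ := ImbedAux.up_aux ℓ n hn S l h1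
    exact ⟨L, a, by rw [b, h2], by rw [c, h3]⟩
  · intro g L hL
    by_cases hlen : L.length < ℓ
    · obtain ⟨p, lA, lB, h1, hA, hB, h2, h3⟩ := ImbedAux.low_aux ℓ n hn S L hlen
      rw [hL, ImbedAux.emb_apply] at h2 h3
      have e2 := congrArg Prod.fst h2
      have e3 := congrArg Prod.fst h3
      simp only [ImbedAux.vv_int, dvd_zero, dvd_refl, if_true, mul_one] at e2 e3
      have w2 : wordNorm (S : Set G) g ≤ lA.length := Nat.sInf_le ⟨lA, hA, rfl, e2.symm⟩
      have w3 : wordNorm (S : Set G) g ≤ lB.length := Nat.sInf_le ⟨lB, hB, rfl, e3.symm⟩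
      have := abs_nonneg p
      omega
    · have : wordNorm (S : Set G) g ≤ ∑ g : G, wordNorm (S : Set G) g :=
        Finset.single_le_sum (f := fun g => wordNorm (S : Set G) g) (fun _ _ => Nat.zero_le _)
          (Finset.mem_univ g)
      simp only [ℓ] at hlen
      omega
end

section
/- Let Q be a group, let m ≥ 1, and let q, q' ∈ Q satisfy q^m = 1 and q'^m = 1. In the wreath product Q ≀ C_{2m} = Q^{C_{2m}} ⋊ C_{2m}, where C_{2m} = ℤ/2mℤ acts on functions φ: C_{2m} → Q by (φ^r)(k) = φ(k+1) for r the generator 1 of C_{2m}, let t: C_{2m} → Q be the function with t(k) = q^k for 0 ≤ k ≤ m−1 and t(m+k) = q'^k for 0 ≤ k ≤ m−1. Then the commutator [t, r] = t⁻¹·r⁻¹·t·r lies in the base group Q^{C_{2m}} and equals the function u with u(k) = q for 0 ≤ k ≤ m−1 and u(k) = q' for m ≤ k ≤ 2m−1. -/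
/-- The right action of the cyclic group `C_m = ℤ/mℤ` (written multiplicatively)
on itself by translation; with the induced action on functions `φ : C_m → Q`,
the conjugate `φ ^ r = r⁻¹ φ r` of `φ` by the generator `r = 1` in the wreath
product `Q ≀ C_m` is `k ↦ φ (k + 1)`. -/
def cycRAct (m : ℕ) : RAct (Multiplicative (ZMod m)) (ZMod m) where
  act k g := k - g.toAdd
  act_one := by intro k; simp
  act_mul := by intro k g h; simp [sub_sub]

open SemidirectProduct in
/-- In the wreath product `Q ≀ C_{2m}`, for `q, q' ∈ Q` with `qᵐ = q'ᵐ = 1` and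
`t : C_{2m} → Q` given by `t k = q ^ k` for `0 ≤ k ≤ m - 1` and
`t (m + k) = q' ^ k` for `0 ≤ k ≤ m - 1`, the commutator
`[t, r] = t⁻¹ r⁻¹ t r` with the generator `r` of `C_{2m}` lies in the base
group `Q ^ {C_{2m}}` and equals the function with value `q` on
`{0, …, m - 1}` and value `q'` on `{m, …, 2m - 1}`. -/
theorem commutator_in_cyclic_wreath
    (Q : Type) [Group Q] (m : ℕ) (hm : 1 ≤ m) (q q' : Q)
    (hq : q ^ m = 1) (hq' : q' ^ m = 1) :
    (inl (fun k : ZMod (2 * m) => if k.val < m then q ^ k.val else q' ^ (k.val - m)) :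
        UWreath (cycRAct (2 * m)) Q)⁻¹ *
      (inr (Multiplicative.ofAdd (1 : ZMod (2 * m))) : UWreath (cycRAct (2 * m)) Q)⁻¹ *
      inl (fun k : ZMod (2 * m) => if k.val < m then q ^ k.val else q' ^ (k.val - m)) *
      inr (Multiplicative.ofAdd (1 : ZMod (2 * m))) =
    inl (fun k : ZMod (2 * m) => if k.val < m then q else q') := by
  have key : ∀ t u : ZMod (2 * m) → Q, (∀ k, (t k)⁻¹ * t (k + 1) = u k) →
      (inl t : UWreath (cycRAct (2 * m)) Q)⁻¹ *
        (inr (Multiplicative.ofAdd (1 : ZMod (2 * m))) : UWreath (cycRAct (2 * m)) Q)⁻¹ *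
        inl t * inr (Multiplicative.ofAdd (1 : ZMod (2 * m))) = inl u := by
    intro t u h
    have h1 : (inr (Multiplicative.ofAdd (1 : ZMod (2 * m))) :
        UWreath (cycRAct (2 * m)) Q)⁻¹ * inl t *
        inr (Multiplicative.ofAdd (1 : ZMod (2 * m))) = inl (fun k => t (k + 1)) := by
      have h2 := inl_aut_inv (φ := (cycRAct (2 * m)).wreathAut Q)
        (Multiplicative.ofAdd (1 : ZMod (2 * m))) t
      rw [map_inv] at h2
      rw [← h2]
      congr 1
      rw [← map_inv]
      funext k
      show t (k - Multiplicative.toAdd (Multiplicative.ofAdd (1 : ZMod (2 * m)))⁻¹) = t (k + 1)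
      simp
    rw [mul_assoc, mul_assoc, ← mul_assoc _ (inl t), h1, ← map_inv, ← map_mul]
    congr 1
    funext k
    exact h k
  apply key
  intro k
  have : NeZero (2 * m) := ⟨by omega⟩
  have hk := ZMod.val_lt k
  have h1 : (1 : ZMod (2 * m)).val = 1 := by
    rw [ZMod.val_one_eq_one_mod, Nat.mod_eq_of_lt (by omega)]
  have hadd := ZMod.val_add k 1
  rw [h1] at hadd
  by_cases hlast : k.val + 1 = 2 * m
  · rw [hlast, Nat.mod_self] at hadd
    have e : k.val - m + 1 = m := by omega
    have hn : ¬ k.val < m := by omega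
    rw [hadd, if_neg hn, if_pos (by omega : 0 < m), if_neg hn, pow_zero, mul_one,
      inv_eq_iff_mul_eq_one, ← pow_succ, e, hq']
  · rw [Nat.mod_eq_of_lt (by omega)] at hadd
    rw [hadd]
    by_cases h : k.val + 1 < m
    · have h' : k.val < m := by omega
      simp only [if_pos h, if_pos h', pow_succ, inv_mul_cancel_left]
    · by_cases h' : k.val < m
      · have e : k.val + 1 = m := by omega
        rw [if_pos h', if_neg h, if_pos h', e, Nat.sub_self, pow_zero, mul_one,
          inv_eq_iff_mul_eq_one, ← pow_succ, e, hq]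
      · have e : k.val + 1 - m = k.val - m + 1 := by omega
        simp only [if_neg h, if_neg h', e, pow_succ, inv_mul_cancel_left]
end

section
/- Let d ∈ ℕ and let (H_i)_{i∈ℕ} be a sequence of finite groups, each with a distinguished generating set of cardinality d. Then there exist, for every subset S ⊆ ℕ, a finitely generated group W_S of subexponential growth together with, for every s ∈ S, an injective homomorphism Ψ_s: [H_s,H_s] → W_S, and constants K_s, L_s ≥ 1 which depend only on s and on the groups H_j with j ∈ S, j < s (in particular not on H_s, nor on H_j for j > s), such that d_perfect(h,h')/K_s ≤ d_{W_S}(Ψ_s(h), Ψ_s(h')) ≤ L_s · d_perfect(h,h') for all h,h' ∈ [H_s,H_s], where d_{W_S} is the word metric on W_S with respect to a fixed finite generating set and d_perfect is the perfect metric on [H_s,H_s]. -/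
/-- The set of elements of `G` expressible as a product of at most `n`
elements of `S ∪ S⁻¹`. -/
def wordBall {G : Type*} [Group G] (S : Set G) (n : ℕ) : Set G :=
  {g | ∃ l : List G, (∀ x ∈ l, x ∈ S ∨ x⁻¹ ∈ S) ∧ l.length ≤ n ∧ l.prod = g}

/-- The word metric `d_S(x, y) = ‖x y⁻¹‖_S`. -/
noncomputable def wordDist {G : Type*} [Group G] (S : Set G) (x y : G) : ℕ :=
  wordNorm S (x * y⁻¹)

/-- `(G, S)` has subexponential growth. -/
def SubexpGrowth {G : Type*} [Group G] (S : Set G) : Prop :=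
  ∀ lam : ℝ, 1 < lam → ∀ᶠ n : ℕ in Filter.atTop,
    (Nat.card (wordBall S n) : ℝ) < lam ^ n

/-- A finite group marked with a distinguished generating set of cardinality
`d`. -/
structure MarkedGroup (d : ℕ) : Type 1 where
  carrier : Type
  [grp : Group carrier]
  [fin : Fintype carrier]
  gens : Finset carrier
  card_gens : gens.card = d
  isGen : Subgroup.closure (gens : Set carrier) = ⊤

attribute [instance] MarkedGroup.grp MarkedGroup.fin

/-- The perfect metric `d_perfect(x, y) = ‖x y⁻¹‖_perfect`. -/
noncomputable def perfectDist {H : Type*} [Group H] (T : Set H) (x y : H) : ℕ :=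
  perfectNorm T (x * y⁻¹)

abbrev VV := ZMod 2 × ZMod 2
abbrev BB (D : ℕ) := VV × (Fin D → ℤ)

structure Sys (D : ℕ) (G : Type) [Group G] where
  a : G
  ha : a * a = 1
  act : BB D → G
  act_add : ∀ x y, act (x + y) = act x * act y

namespace Sys
variable {D : ℕ} {G : Type} [Group G] (S : Sys D G)

theorem act_zero : S.act 0 = 1 := by
  have h := S.act_add 0 0
  rw [add_zero] at h
  exact (left_eq_mul.mp h)

theorem act_neg (x : BB D) : S.act (-x) = (S.act x)⁻¹ := by
  rw [eq_inv_iff_mul_eq_one, ← S.act_add, neg_add_cancel, S.act_zero]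

theorem a_inv : S.a⁻¹ = S.a := by
  rw [inv_eq_iff_mul_eq_one]; exact S.ha

/-- The action as a monoid homomorphism. -/
def hom : Multiplicative (BB D) →* G where
  toFun x := S.act x.toAdd
  map_one' := S.act_zero
  map_mul' _ _ := S.act_add _ _

end Sys

def shV (v : VV) : VV := (v.1 + v.2, v.1)
def usV (v : VV) : VV := (v.2, v.1 + v.2)
theorem shV_usV (v : VV) : shV (usV v) = v := by revert v; decide
theorem shV_add (v w : VV) : shV (v + w) = shV v + shV w := by revert v w; decide

def shB {D : ℕ} (b : BB D) : BB D := (shV b.1, b.2)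
theorem shB_add {D : ℕ} (b c : BB D) : shB (b + c) = shB b + shB c := by
  simp [shB, shV_add]

/-- A pair of permutations acting on the two halves of `Bool × Y`. -/
def pr {Y : Type} (p q : Equiv.Perm Y) : Equiv.Perm (Bool × Y) :=
  Equiv.prodCongrRight (fun i => cond i q p)

@[simp] theorem pr_true {Y : Type} (p q : Equiv.Perm Y) (y : Y) :
    pr p q (true, y) = (true, q y) := rfl
@[simp] theorem pr_false {Y : Type} (p q : Equiv.Perm Y) (y : Y) :
    pr p q (false, y) = (false, p y) := rfl

theorem pr_mul {Y : Type} (p q p' q' : Equiv.Perm Y) :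
    pr (p * p') (q * q') = pr p q * pr p' q' := by
  ext1 ⟨i, y⟩; cases i <;> simp

theorem pr_one {Y : Type} : pr (1 : Equiv.Perm Y) 1 = 1 := by
  ext1 ⟨i, y⟩; cases i <;> simp

def swp (Y : Type) : Equiv.Perm (Bool × Y) := Equiv.boolNot.prodCongr (Equiv.refl Y)
@[simp] theorem swp_apply {Y : Type} (i : Bool) (y : Y) : swp Y (i, y) = (!i, y) := rfl

theorem zmod_aux {G : Type} [Group G] (a : G) (ha : a * a = 1) (x y : ZMod 2) :
    (if x + y = 0 then 1 else a) = (if x = 0 then 1 else a) * (if y = 0 then 1 else a) := by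
  have h : ∀ x : ZMod 2, x = 0 ∨ x = 1 := by decide
  have h1 : (1 : ZMod 2) ≠ 0 := by decide
  have h2 : (1 : ZMod 2) + 1 = 0 := by decide
  rcases h x with rfl | rfl <;> rcases h y with rfl | rfl <;> simp [h1, h2, ha]

def Sys.lift {D : ℕ} {Y : Type} (S : Sys D (Equiv.Perm Y)) : Sys D (Equiv.Perm (Bool × Y)) where
  a := swp Y
  ha := by ext1 ⟨i, y⟩; simp
  act b := pr (if b.1.1 = 0 then 1 else S.a) (S.act (shB b))
  act_add x y := by
    rw [← pr_mul, shB_add, S.act_add]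
    congr 1
    exact zmod_aux S.a S.ha x.1.1 y.1.1

/-! ### Words -/

/-- `(b, [b₁, …, bₖ])` stands for the product `b a b₁ a ⋯ a bₖ`. -/
abbrev Wd (D : ℕ) := BB D × List (BB D)

section words
variable {D : ℕ}

def evl {G : Type} [Group G] (S : Sys D G) (b : BB D) (L : List (BB D)) : G :=
  S.act b * (L.map (fun c => S.a * S.act c)).prod

def ev {G : Type} [Group G] (S : Sys D G) (w : Wd D) : G := evl S w.1 w.2

def e0 : Wd D := (0, [])
def aMul (w : Wd D) : Wd D := (0, w.1 :: w.2)
def bMul (b : BB D) (w : Wd D) : Wd D := (b + w.1, w.2)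

theorem ev_aMul {G : Type} [Group G] (S : Sys D G) (w : Wd D) :
    ev S (aMul w) = S.a * ev S w := by
  simp [ev, evl, aMul, S.act_zero, mul_assoc]

theorem ev_bMul {G : Type} [Group G] (S : Sys D G) (b : BB D) (w : Wd D) :
    ev S (bMul b w) = S.act b * ev S w := by
  simp [ev, evl, bMul, S.act_add, mul_assoc]

/-- weight of a letter -/
def wv (v : VV) : ℕ :=
  if v = (1, 0) then 18 else if v = (1, 1) then 15 else if v = (0, 1) then 12 else 0

def wB (b : BB D) : ℕ := if b.1 = 0 then (if b.2 = 0 then 0 else 12) else wv b.1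

def zB (b : BB D) : ℕ := ∑ i, (b.2 i).natAbs

def wt (w : Wd D) : ℕ := wB w.1 + (w.2.map (fun c => 8 + wB c)).sum
def zl (w : Wd D) : ℕ := zB w.1 + (w.2.map zB).sum
def zs (w : Wd D) : Fin D → ℤ := w.1.2 + (w.2.map Prod.snd).sum

theorem wv_add : ∀ v w : VV, v ≠ 0 → w ≠ 0 → v + w ≠ 0 → wv (v + w) ≤ wv v + wv w := by decide
theorem wv_ge : ∀ v : VV, v ≠ 0 → 12 ≤ wv v := by decide
theorem VV_dbl : ∀ v w : VV, v + w = 0 → v = 0 → w = 0 := by decide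

theorem wB_zero : wB (0 : BB D) = 0 := by simp [wB]
theorem zB_zero : zB (0 : BB D) = 0 := by simp [zB]

theorem wB_le (b : BB D) : wB b ≤ 18 := by
  have : ∀ v, wv v ≤ 18 := by decide
  unfold wB; split_ifs <;> simp [this]

theorem wB_add (b c : BB D) : wB (b + c) ≤ wB b + wB c := by
  obtain ⟨v, z⟩ := b
  obtain ⟨w, y⟩ := c
  simp only [wB, Prod.mk_add_mk]
  by_cases hv : v = 0
  · subst hv
    by_cases hw : w = 0
    · subst hw
      by_cases hz : z = 0 <;> by_cases hy : y = 0 <;> simp [hz, hy]; split_ifs <;> simp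
    · simp [hw]
  · by_cases hw : w = 0
    · subst hw; simp [hv]
    · have h1 := wv_ge v hv
      have h2 := wv_ge w hw
      by_cases hs : v + w = 0
      · simp only [hs, hv, hw, if_true, if_false]; split_ifs <;> omega
      · simp only [hs, hv, hw, if_false]; exact wv_add v w hv hw hs

theorem zB_add (b c : BB D) : zB (b + c) ≤ zB b + zB c := by
  unfold zB
  rw [← Finset.sum_add_distrib]
  exact Finset.sum_le_sum fun i _ => Int.natAbs_add_le _ _

theorem wt_aMul (w : Wd D) : wt (aMul w) = 8 + wt w := by
  simp [wt, aMul, wB_zero]; ring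
theorem zl_aMul (w : Wd D) : zl (aMul w) = zl w := by
  simp [zl, aMul, zB_zero]
theorem zs_aMul (w : Wd D) : zs (aMul w) = zs w := by
  simp [zs, aMul]
theorem wt_bMul (b : BB D) (w : Wd D) : wt (bMul b w) ≤ wB b + wt w := by
  have := wB_add b w.1
  simp only [wt, bMul]; omega
theorem zl_bMul (b : BB D) (w : Wd D) : zl (bMul b w) ≤ zB b + zl w := by
  have := zB_add b w.1
  simp only [zl, bMul]; omega
theorem zs_bMul (b : BB D) (w : Wd D) : zs (bMul b w) = b.2 + zs w := by
  simp only [zs, bMul, Prod.snd_add, add_assoc]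

/-- multiply a word on the left by the `0`-section of a letter -/
def m0 (b : BB D) (w : Wd D) : Wd D := if b.1.1 = 0 then w else aMul w
def m1 (b : BB D) (w : Wd D) : Wd D := bMul (shB b) w

theorem contr_v : ∀ v : VV, v ≠ 0 →
    10 * ((if v.1 = 0 then 0 else 8) + wv (shV v)) ≤ 9 * (8 + wv v) := by decide
theorem shV_zero : ∀ v : VV, shV v = 0 ↔ v = 0 := by decide

theorem contr_B (b : BB D) :
    10 * ((if b.1.1 = 0 then 0 else 8) + wB (shB b)) ≤ 9 * (8 + wB b) := by
  obtain ⟨v, z⟩ := b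
  by_cases hv : v = 0
  · subst hv
    by_cases hz : z = 0 <;> simp [wB, shB, (shV_zero 0).2 rfl, hz]
  · have : shV v ≠ 0 := by rwa [Ne, shV_zero]
    simpa [wB, shB, hv, this] using contr_v v hv

theorem wt_m0 (b : BB D) (w : Wd D) : wt (m0 b w) = (if b.1.1 = 0 then 0 else 8) + wt w := by
  unfold m0; split_ifs <;> simp [wt_aMul]
theorem zl_m0 (b : BB D) (w : Wd D) : zl (m0 b w) = zl w := by
  unfold m0; split_ifs <;> simp [zl_aMul]
theorem zs_m0 (b : BB D) (w : Wd D) : zs (m0 b w) = zs w := by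
  unfold m0; split_ifs <;> simp [zs_aMul]
theorem ev_m0 {G : Type} [Group G] (S : Sys D G) (b : BB D) (w : Wd D) :
    ev S (m0 b w) = (if b.1.1 = 0 then 1 else S.a) * ev S w := by
  unfold m0; split_ifs <;> simp [ev_aMul]

/-- first-level sections -/
def secl : BB D → List (BB D) → Bool × Wd D × Wd D
  | b, [] => (false, m0 b e0, m1 b e0)
  | b, c :: L =>
    let r := secl c L
    if r.1 then (false, m0 b r.2.1, m1 b r.2.2) else (true, m1 b r.2.1, m0 b r.2.2)

def sc (w : Wd D) : Bool × Wd D × Wd D := secl w.1 w.2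

theorem ev_zero {G : Type} [Group G] (S : Sys D G) : ev S (e0 : Wd D) = 1 := by
  show evl S 0 [] = 1
  simp [evl, S.act_zero]

theorem ev_lift_secl {Y : Type} (S : Sys D (Equiv.Perm Y)) (b : BB D) (L : List (BB D)) :
    (∀ y, evl S.lift b L (false, y) = ((secl b L).1, ev S (secl b L).2.1 y)) ∧
    (∀ y, evl S.lift b L (true, y) = (!(secl b L).1, ev S (secl b L).2.2 y)) := by
  induction L generalizing b with
  | nil => 
    constructor <;> intro y <;> simp [evl, secl, ev_m0, m1, ev_bMul, ev_zero, Sys.lift, -ite_mul, -mul_ite]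
  | cons c L ih =>
    have key : ∀ x, evl S.lift b (c :: L) x = S.lift.act b (S.lift.a (evl S.lift c L x)) := by
      intro x; simp [evl, mul_assoc]
    obtain ⟨h0, h1⟩ := ih c
    constructor <;> intro y
    · rw [key, h0]
      cases h : (secl c L).1 <;> simp [secl, h, Sys.lift, ev_m0, m1, ev_bMul, -ite_mul, -mul_ite]
    · rw [key, h1]
      cases h : (secl c L).1 <;> simp [secl, h, Sys.lift, ev_m0, m1, ev_bMul, -ite_mul, -mul_ite]

theorem ev_lift_congr {Y : Type} (S : Sys D (Equiv.Perm Y)) (w w' : Wd D)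
    (h : (sc w).1 = (sc w').1) (h0 : ev S (sc w).2.1 = ev S (sc w').2.1)
    (h1 : ev S (sc w).2.2 = ev S (sc w').2.2) : ev S.lift w = ev S.lift w' := by
  obtain ⟨a0, a1⟩ := ev_lift_secl S w.1 w.2
  obtain ⟨b0, b1⟩ := ev_lift_secl S w'.1 w'.2
  ext1 ⟨i, y⟩
  cases i
  · refine (a0 y).trans (Eq.trans ?_ (b0 y).symm)
    change ((sc w).1, ev S (sc w).2.1 y) = ((sc w').1, ev S (sc w').2.1 y)
    rw [h, h0]
  · refine (a1 y).trans (Eq.trans ?_ (b1 y).symm)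
    change (!(sc w).1, ev S (sc w).2.2 y) = (!(sc w').1, ev S (sc w').2.2 y)
    rw [h, h1]

theorem wt_zero : wt (e0 : Wd D) = 0 := by
  show wB 0 + 0 = 0
  simp [wB_zero]
theorem zl_zero : zl (e0 : Wd D) = 0 := by
  show zB 0 + 0 = 0
  simp [zB_zero]
theorem zs_zero : zs (e0 : Wd D) = 0 := by
  show (0 : Fin D → ℤ) + 0 = 0
  simp

theorem wt_secl (b : BB D) (L : List (BB D)) :
    10 * (wt (secl b L).2.1 + wt (secl b L).2.2) ≤ 9 * (wt (b, L) + 8) := by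
  induction L generalizing b with
  | nil =>
    have h1 := contr_B b
    have h2 := wt_bMul (shB b) e0
    simp only [secl, wt_m0, m1, wt_zero] at *
    simp only [wt, List.map_nil, List.sum_nil] at *
    omega
  | cons c L ih =>
    have h1 := contr_B b
    have h := ih c
    have e : wt (b, c :: L) = wB b + 8 + wt (c, L) := by simp [wt]; ring
    have h3 := wt_bMul (shB b) (secl c L).2.1
    have h2 := wt_bMul (shB b) (secl c L).2.2
    rw [e]
    cases h : (secl c L).1 <;> simp only [secl, h, wt_m0, m1, if_true, Bool.false_eq_true, if_false] <;> omega

theorem zB_shB (b : BB D) : zB (shB b) = zB b := rfl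

theorem zl_secl (b : BB D) (L : List (BB D)) :
    zl (secl b L).2.1 + zl (secl b L).2.2 ≤ zl (b, L) := by
  induction L generalizing b with
  | nil =>
    have h2 := zl_bMul (shB b) e0
    simp only [secl, zl_m0, m1, zl_zero, zB_shB] at *
    simp only [zl, List.map_nil, List.sum_nil] at *
    omega
  | cons c L ih =>
    have h := ih c
    have e : zl (b, c :: L) = zB b + zl (c, L) := by simp [zl]
    have h3 := zl_bMul (shB b) (secl c L).2.1
    have h2 := zl_bMul (shB b) (secl c L).2.2
    rw [zB_shB] at h2 h3
    rw [e]
    cases h : (secl c L).1 <;> simp only [secl, h, zl_m0, m1, if_true, Bool.false_eq_true, if_false] <;> omega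

theorem zs_secl (b : BB D) (L : List (BB D)) :
    zs (secl b L).2.1 + zs (secl b L).2.2 = zs (b, L) := by
  induction L generalizing b with
  | nil =>
    simp only [secl, zs_m0, m1, zs_zero, zs_bMul]
    simp [zs, shB]
  | cons c L ih =>
    have h := ih c
    have e : zs (b, c :: L) = b.2 + zs (c, L) := by simp [zs]
    rw [e, ← h]
    cases h : (secl c L).1 <;>
      simp only [secl, h, zs_m0, m1, if_true, Bool.false_eq_true, if_false, zs_bMul, shB] <;> abel

/-! ### Trees of sections -/

def Tr (D : ℕ) : ℕ → Type
  | 0 => Wd D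
  | m + 1 => Bool × Tr D m × Tr D m

def scN : (m : ℕ) → Wd D → Tr D m
  | 0, w => w
  | m + 1, w => ((sc w).1, scN m (sc w).2.1, scN m (sc w).2.2)

def wtT : (m : ℕ) → Tr D m → ℕ
  | 0, w => wt (show Wd D from w)
  | m + 1, t => wtT m t.2.1 + wtT m t.2.2

def zlT : (m : ℕ) → Tr D m → ℕ
  | 0, w => zl (show Wd D from w)
  | m + 1, t => zlT m t.2.1 + zlT m t.2.2

def zsT : (m : ℕ) → Tr D m → (Fin D → ℤ)
  | 0, w => zs (show Wd D from w)
  | m + 1, t => zsT m t.2.1 + zsT m t.2.2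

theorem zsT_scN (m : ℕ) (w : Wd D) : zsT m (scN m w) = zs w := by
  induction m generalizing w with
  | zero => rfl
  | succ m ih => 
    show zsT m (scN m (sc w).2.1) + zsT m (scN m (sc w).2.2) = zs w
    rw [ih, ih]; exact zs_secl w.1 w.2

theorem zlT_scN (m : ℕ) (w : Wd D) : zlT m (scN m w) ≤ zl w := by
  induction m generalizing w with
  | zero => exact le_rfl
  | succ m ih => 
    show zlT m (scN m (sc w).2.1) + zlT m (scN m (sc w).2.2) ≤ zl w
    exact (add_le_add (ih _) (ih _)).trans (zl_secl w.1 w.2)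

theorem wtT_scN (D m : ℕ) : ∃ C : ℝ, 0 ≤ C ∧ ∀ w : Wd D,
    (wtT m (scN m w) : ℝ) ≤ (9 / 10 : ℝ) ^ m * wt w + C := by
  induction m with
  | zero => exact ⟨0, le_rfl, fun w => by simp [wtT, scN]⟩
  | succ m ih => 
    obtain ⟨C, hC, h⟩ := ih
    refine ⟨(9 / 10 : ℝ) ^ (m + 1) * 8 + 2 * C, by positivity, fun w => ?_⟩
    have e : wtT (m + 1) (scN (m + 1) w) =
      wtT m (scN m (sc w).2.1) + wtT m (scN m (sc w).2.2) := rfl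
    rw [e]; push_cast
    have h1 : (10 : ℝ) * (wt (sc w).2.1 + wt (sc w).2.2) ≤ 9 * (wt w + 8) := by
      exact_mod_cast wt_secl w.1 w.2
    have h2 := h (sc w).2.1
    have h3 := h (sc w).2.2
    have h4 : (9 / 10 : ℝ) ^ m * (wt (sc w).2.1 + wt (sc w).2.2) ≤
      (9 / 10 : ℝ) ^ m * ((9 / 10) * (wt w + 8)) := by gcongr; linarith
    rw [pow_succ]; linarith

/-! ### Iterated lifts -/

def Lv (Y : Type) : ℕ → Type
  | 0 => Y
  | k + 1 => Bool × Lv Y k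

def liftN {Y : Type} (S : Sys D (Equiv.Perm Y)) : (k : ℕ) → Sys D (Equiv.Perm (Lv Y k))
  | 0 => S
  | k + 1 => (liftN S k).lift

theorem ev_liftN_congr {Y : Type} (S : Sys D (Equiv.Perm Y)) (m k : ℕ) (h : m ≤ k) (w w' : Wd D)
    (hw : scN m w = scN m w') : ev (liftN S k) w = ev (liftN S k) w' := by
  induction m generalizing k w w' with
  | zero => 
    have : w = w' := hw
    rw [this]
  | succ m ih =>
    obtain ⟨k, rfl⟩ : ∃ k', k = k' + 1 := ⟨k - 1, by omega⟩
    have h1 : (sc w).1 = (sc w').1 := congrArg (fun t : Bool × Tr D m × Tr D m => t.1) hw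
    have h2 : scN m (sc w).2.1 = scN m (sc w').2.1 := congrArg (fun t : Bool × Tr D m × Tr D m => t.2.1) hw
    have h3 : scN m (sc w).2.2 = scN m (sc w').2.2 := congrArg (fun t : Bool × Tr D m × Tr D m => t.2.2) hw
    exact ev_lift_congr (liftN S k) w w' h1 (ih k (by omega) _ _ h2) (ih k (by omega) _ _ h3)

end words

open scoped ENNReal

theorem tsum_pi_prod {β : Type} (x : β → ℝ≥0∞) (n : ℕ) :
    ∑' f : Fin n → β, ∏ i, x (f i) = (∑' b, x b) ^ n := by
  induction n with
  | zero => simp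
  | succ n ih =>
    rw [← (Fin.consEquiv (fun _ : Fin (n + 1) => β)).tsum_eq, ENNReal.tsum_prod']
    simp only [Fin.consEquiv_apply, Fin.prod_univ_succ, Fin.cons_zero, Fin.cons_succ]
    simp_rw [ENNReal.tsum_mul_left, ih, ENNReal.tsum_mul_right]
    rw [pow_succ, mul_comm]

theorem tsum_list_prod {β : Type} (x : β → ℝ≥0∞) :
    ∑' L : List β, (L.map x).prod = ∑' n : ℕ, (∑' b, x b) ^ n := by
  rw [← List.equivSigmaTuple.symm.tsum_eq, ENNReal.tsum_sigma']
  refine tsum_congr fun n => ?_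
  rw [← tsum_pi_prod]
  refine tsum_congr fun f => ?_
  simp [List.equivSigmaTuple, List.map_ofFn, List.prod_ofFn]

theorem tsum_int_lt (r : ℝ≥0∞) (hr : r < 1) : ∑' k : ℤ, r ^ k.natAbs < ⊤ := by
  have hg : ∑' n : ℕ, r ^ n < ⊤ := by
    rw [ENNReal.tsum_geometric]
    simpa using tsub_pos_of_lt hr
  rw [tsum_of_nat_of_neg_add_one ENNReal.summable ENNReal.summable]
  refine ENNReal.add_lt_top.2 ⟨?_, ?_⟩
  · refine lt_of_le_of_lt (ENNReal.tsum_le_tsum fun n => ?_) hg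
    simp
  · refine lt_of_le_of_lt (ENNReal.tsum_le_tsum fun n => ?_) hg
    refine pow_le_pow_right_of_le_one' hr.le ?_
    omega

theorem tsum_BB_lt (D : ℕ) (r : ℝ≥0∞) (hr : r < 1) : ∑' b : BB D, r ^ zB b < ⊤ := by
  rw [ENNReal.tsum_prod']
  have : ∀ v : VV, ∑' z : Fin D → ℤ, r ^ zB (v, z) = (∑' k : ℤ, r ^ k.natAbs) ^ D := by
    intro v
    rw [← tsum_pi_prod]
    refine tsum_congr fun z => ?_
    simp [zB, Finset.prod_pow_eq_pow_sum]
  simp_rw [this]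
  rw [tsum_fintype]
  refine ENNReal.sum_lt_top.2 fun v _ => ENNReal.pow_lt_top (tsum_int_lt r hr)

section
variable {D : ℕ}

theorem exists_u (D : ℕ) (r : ℝ≥0∞) (hr : r < 1) : ∃ u : ℝ≥0∞, u ≠ 0 ∧ u ≤ 1 ∧
    ∑' w : Wd D, u ^ wt w * r ^ zl w < ⊤ := by
  set κ := ∑' b : BB D, r ^ zB b with hκ
  have hκt : κ < ⊤ := tsum_BB_lt D r hr
  have hκ1 : 1 ≤ κ := by
    refine le_trans ?_ (ENNReal.le_tsum (0 : BB D))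
    simp [zB_zero]
  have hκ0 : κ ≠ 0 := (zero_lt_one.trans_le hκ1).ne'
  set u : ℝ≥0∞ := (2 * κ)⁻¹ with hu
  have hu1 : u ≤ 1 := by
    rw [hu, ENNReal.inv_le_one]
    calc (1 : ℝ≥0∞) ≤ 2 * 1 := by norm_num
      _ ≤ 2 * κ := by gcongr
  have huk : u ^ 8 * κ ≤ 2⁻¹ := by
    calc u ^ 8 * κ ≤ u ^ 1 * κ := by
          gcongr ?_ * _
          exact pow_le_pow_right_of_le_one' hu1 (by norm_num)
      _ = 2⁻¹ := by
        rw [pow_one, hu, ENNReal.mul_inv (by simp) (by simp), mul_assoc,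
          ENNReal.inv_mul_cancel hκ0 hκt.ne, mul_one]
  refine ⟨u, ?_, hu1, ?_⟩
  · rw [hu]; exact ENNReal.inv_ne_zero.2 (ENNReal.mul_ne_top (by simp) hκt.ne)
  · have hle : ∀ w : Wd D, u ^ wt w * r ^ zl w ≤
        r ^ zB w.1 * (w.2.map (fun b => u ^ 8 * r ^ zB b)).prod := by
      rintro ⟨b, L⟩
      have e1 : u ^ wt (b, L) ≤ u ^ (8 * L.length) := by
        refine pow_le_pow_right_of_le_one' hu1 ?_
        simp only [wt]
        induction L with
        | nil => simp
        | cons c L ih => simp at ih ⊢; omega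
      have e2 : r ^ zl (b, L) = r ^ zB b * (L.map (fun b => r ^ zB b)).prod := by
        clear e1
        simp only [zl, pow_add]
        congr 1
        induction L with
        | nil => simp
        | cons c L ih => simp [pow_add, ih]
      have e3 : (L.map (fun b => u ^ 8 * r ^ zB b)).prod =
          u ^ (8 * L.length) * (L.map (fun b => r ^ zB b)).prod := by
        clear e1 e2
        induction L with
        | nil => simp
        | cons c L ih => simp only [List.map_cons, List.prod_cons, ih, List.length_cons, mul_add, pow_add]; ring
      rw [e2]
      simp only [e3]
      calc _ ≤ u ^ (8 * L.length) * (r ^ zB b * (L.map (fun b => r ^ zB b)).prod) := by gcongr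
        _ = _ := by ring
    refine lt_of_le_of_lt (ENNReal.tsum_le_tsum hle) ?_
    rw [ENNReal.tsum_prod']
    simp_rw [ENNReal.tsum_mul_left, ENNReal.tsum_mul_right, tsum_list_prod, ENNReal.tsum_mul_left]
    refine ENNReal.mul_lt_top hκt ?_
    rw [ENNReal.tsum_geometric, ENNReal.inv_lt_top, tsub_pos_iff_lt]
    refine lt_of_le_of_lt huk ?_
    norm_num

theorem tsum_Tr (u r : ℝ≥0∞) (h : ∑' w : Wd D, u ^ wt w * r ^ zl w < ⊤) (m : ℕ) :
    ∑' t : Tr D m, u ^ wtT m t * r ^ zlT m t < ⊤ := by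
  induction m with
  | zero => exact h
  | succ m ih =>
    change ∑' t : Bool × Tr D m × Tr D m, u ^ (wtT m t.2.1 + wtT m t.2.2) *
      r ^ (zlT m t.2.1 + zlT m t.2.2) < ⊤
    have e : ∀ t : Bool × Tr D m × Tr D m, u ^ (wtT m t.2.1 + wtT m t.2.2) *
      r ^ (zlT m t.2.1 + zlT m t.2.2) =
        (u ^ wtT m t.2.1 * r ^ zlT m t.2.1) * (u ^ wtT m t.2.2 * r ^ zlT m t.2.2) := by
      intro t; rw [pow_add, pow_add]; ring
    simp_rw [e]
    rw [ENNReal.tsum_prod', tsum_fintype]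
    refine ENNReal.sum_lt_top.2 fun v _ => ?_
    rw [ENNReal.tsum_prod']
    simp_rw [ENNReal.tsum_mul_left, ENNReal.tsum_mul_right]
    exact ENNReal.mul_lt_top ih ih

/-- Counting trees of small weight. -/
theorem count_Tr (D : ℕ) (ρ : ℝ) (hρ : 1 < ρ) : ∃ μ : ℝ, 1 ≤ μ ∧ ∀ m, ∃ Z : ℝ, 0 ≤ Z ∧ 
    ∀ A n : ℕ, {t : Tr D m | wtT m t ≤ A ∧ zlT m t ≤ n}.Finite ∧
      ({t : Tr D m | wtT m t ≤ A ∧ zlT m t ≤ n}.ncard : ℝ) ≤ Z * μ ^ A * ρ ^ n := by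
  set r : ℝ≥0∞ := (ENNReal.ofReal ρ)⁻¹ with hr
  have hr1 : r < 1 := by
    rw [hr, ENNReal.inv_lt_one]
    simpa using hρ
  have hr0 : r ≠ 0 := by simp [hr]
  obtain ⟨u, hu0, hu1, hu⟩ := exists_u D r hr1
  have hut : u ≠ ⊤ := (hu1.trans_lt ENNReal.one_lt_top).ne
  have hup : 0 < u.toReal := ENNReal.toReal_pos hu0 hut
  have hrr : r.toReal = ρ⁻¹ := by
    rw [hr, ENNReal.toReal_inv, ENNReal.toReal_ofReal (by linarith)]
  refine ⟨u.toReal⁻¹, ?_, fun m => ?_⟩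
  · rw [one_le_inv₀ hup]
    exact ENNReal.toReal_mono ENNReal.one_ne_top hu1
  · have hZ := tsum_Tr u r hu m
    refine ⟨(∑' t : Tr D m, u ^ wtT m t * r ^ zlT m t).toReal, ENNReal.toReal_nonneg, fun A n => ?_⟩
    have hc0 : u ^ A * r ^ n ≠ 0 := mul_ne_zero (pow_ne_zero _ hu0) (pow_ne_zero _ hr0)
    have hsub : {t : Tr D m | wtT m t ≤ A ∧ zlT m t ≤ n} ⊆
        {t : Tr D m | u ^ A * r ^ n ≤ u ^ wtT m t * r ^ zlT m t} := by
      rintro t ⟨h1, h2⟩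
      exact mul_le_mul' (pow_le_pow_right_of_le_one' hu1 h1) (pow_le_pow_right_of_le_one' hr1.le h2)
    have hfin : {t : Tr D m | wtT m t ≤ A ∧ zlT m t ≤ n}.Finite :=
      (ENNReal.finite_const_le_of_tsum_ne_top hZ.ne hc0).subset hsub
    refine ⟨hfin, ?_⟩
    have hb : (hfin.toFinset.card : ℝ≥0∞) * (u ^ A * r ^ n) ≤
        ∑' t : Tr D m, u ^ wtT m t * r ^ zlT m t := by
      rw [← nsmul_eq_mul]
      refine (Finset.card_nsmul_le_sum _ _ _ ?_).trans (ENNReal.sum_le_tsum hfin.toFinset)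
      intro t ht
      exact hsub (hfin.mem_toFinset.1 ht)
    have hb' := ENNReal.toReal_mono hZ.ne hb
    simp only [ENNReal.toReal_mul, ENNReal.toReal_natCast, ENNReal.toReal_pow, hrr] at hb'
    rw [Set.ncard_eq_toFinset_card _ hfin]
    have hρ0 : 0 < ρ := by linarith
    rw [inv_pow, mul_assoc, ← div_eq_inv_mul, ← div_le_iff₀ (by positivity)]
    refine le_trans (le_of_eq ?_) hb'
    rw [inv_pow]
    field_simp
end


instance Lv.finite (Y : Type) [Finite Y] (k : ℕ) : Finite (Lv Y k) := by
  induction k with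
  | zero => exact ‹Finite Y›
  | succ k ih => exact (inferInstance : Finite (Bool × Lv Y k))

section big
variable {D : ℕ} {Y : ℕ → Type} (S : ∀ s, Sys D (Equiv.Perm (Y s)))

abbrev PP (D : ℕ) (Y : ℕ → Type) : Type :=
  (∀ s, Equiv.Perm (Lv (Y s) s)) × Multiplicative (Fin D → ℤ)

def bigSys : Sys D (PP D Y) where
  a := (fun s => (liftN (S s) s).a, 1)
  ha := Prod.ext (funext fun s => (liftN (S s) s).ha) (by simp)
  act b := (fun s => (liftN (S s) s).act b, Multiplicative.ofAdd b.2)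
  act_add x y := Prod.ext (funext fun s => (liftN (S s) s).act_add x y) rfl

def WW : Subgroup (PP D Y) := Subgroup.closure ({(bigSys S).a} ∪ Set.range (bigSys S).act)

def sysW : Sys D (WW S) where
  a := ⟨(bigSys S).a, Subgroup.subset_closure (Or.inl rfl)⟩
  ha := Subtype.ext (bigSys S).ha
  act b := ⟨(bigSys S).act b, Subgroup.subset_closure (Or.inr ⟨b, rfl⟩)⟩
  act_add x y := Subtype.ext ((bigSys S).act_add x y)

/-- The generators of a system. -/
def Sys.gen {G : Type} [Group G] (R : Sys D G) : Option (VV ⊕ Fin D) → G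
  | none => R.a
  | some (Sum.inl v) => R.act (v, 0)
  | some (Sum.inr i) => R.act (0, Pi.single i 1)

open Classical in
noncomputable def Sys.T {G : Type} [Group G] (R : Sys D G) : Finset G := Finset.univ.image R.gen

theorem Sys.mem_T {G : Type} [Group G] (R : Sys D G) (x : G) : x ∈ (R.T : Set G) ↔ ∃ i, R.gen i = x := by
  simp [Sys.T]

theorem Sys.act_mem {G : Type} [Group G] (R : Sys D G) (H : Subgroup G)
    (h : ∀ i, R.gen i ∈ H) (b : BB D) : R.act b ∈ H := by
  have hz : ∀ z : Fin D → ℤ, R.act (0, z) ∈ H := by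
    let K : AddSubgroup (Fin D → ℤ) :=
      { carrier := {z | R.act (0, z) ∈ H}
        add_mem' := by
          intro x y hx hy
          have : ((0, x + y) : BB D) = (0, x) + (0, y) := by simp
          show R.act (0, x + y) ∈ H
          rw [this, R.act_add]; exact H.mul_mem hx hy
        zero_mem' := by
          show R.act 0 ∈ H
          rw [R.act_zero]; exact H.one_mem
        neg_mem' := by
          intro x hx
          have : ((0, -x) : BB D) = -(0, x) := by simp
          show R.act (0, -x) ∈ H
          rw [this, R.act_neg]; exact H.inv_mem hx }
    intro z
    show z ∈ K
    rw [← Finset.univ_sum_single z]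
    refine K.sum_mem fun i _ => ?_
    have : (Pi.single i (z i) : Fin D → ℤ) = z i • Pi.single i 1 := by
      rw [← Pi.single_smul]; simp
    rw [this]
    exact K.zsmul_mem (h (some (Sum.inr i))) _
  have : b = (b.1, 0) + (0, b.2) := by simp
  rw [this, R.act_add]
  exact H.mul_mem (h (some (Sum.inl b.1))) (hz _)

theorem closure_T : Subgroup.closure ((sysW S).T : Set (WW S)) = ⊤ := by
  set H := Subgroup.closure ((sysW S).T : Set (WW S)) with hH
  have hg : ∀ i, (sysW S).gen i ∈ H := fun i =>
    Subgroup.subset_closure (((sysW S).mem_T _).2 ⟨i, rfl⟩)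
  have hk : WW S ≤ H.map (WW S).subtype := by
    refine (Subgroup.closure_le _).2 ?_
    rintro x (hx | ⟨b, rfl⟩)
    · rw [Set.mem_singleton_iff] at hx
      subst hx
      exact ⟨(sysW S).a, hg none, rfl⟩
    · exact ⟨(sysW S).act b, (sysW S).act_mem H hg b, rfl⟩
  rw [eq_top_iff]
  intro x _
  obtain ⟨y, hy, hyx⟩ := hk x.2
  have : y = x := Subtype.ext hyx
  exact this ▸ hy

theorem gen_word {G : Type} [Group G] (R : Sys D G) (x : G)
    (hx : x ∈ (R.T : Set G) ∨ x⁻¹ ∈ (R.T : Set G)) :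
    x = R.a ∨ ∃ b : BB D, x = R.act b ∧ zB b ≤ 1 := by
  have z1 : ∀ v : VV, zB ((v, 0) : BB D) ≤ 1 := by intro v; simp [zB]
  have z2 : ∀ i : Fin D, zB ((0, Pi.single i 1) : BB D) ≤ 1 := by
    intro i
    simp only [zB]
    rw [Finset.sum_eq_single i] <;> simp +contextual
  have zn : ∀ b : BB D, zB (-b) = zB b := by intro b; simp [zB]
  rcases hx with hx | hx
  · obtain ⟨i, rfl⟩ := (R.mem_T x).1 hx
    rcases i with _ | v | i
    · exact Or.inl rfl
    · exact Or.inr ⟨_, rfl, z1 v⟩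
    · exact Or.inr ⟨_, rfl, z2 i⟩
  · obtain ⟨i, hi⟩ := (R.mem_T _).1 hx
    rcases i with _ | v | i
    · left
      rw [← inv_inv x, ← hi]; exact R.a_inv
    · right
      refine ⟨-(v, 0), ?_, (zn _).trans_le (z1 v)⟩
      rw [R.act_neg]; exact inv_eq_iff_eq_inv.mp hi.symm
    · right
      refine ⟨-(0, Pi.single i 1), ?_, (zn _).trans_le (z2 i)⟩
      rw [R.act_neg]; exact inv_eq_iff_eq_inv.mp hi.symm

theorem ball_word {G : Type} [Group G] (R : Sys D G) (n : ℕ) (x : G)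
    (hx : x ∈ wordBall (R.T : Set G) n) :
    ∃ w : Wd D, ev R w = x ∧ wt w ≤ 18 * n ∧ zl w ≤ n := by
  obtain ⟨l, hl, hn, rfl⟩ := hx
  suffices h : ∃ w : Wd D, ev R w = l.prod ∧ wt w ≤ 18 * l.length ∧ zl w ≤ l.length by
    obtain ⟨w, h1, h2, h3⟩ := h
    exact ⟨w, h1, by omega, by omega⟩
  clear hn
  induction l with
  | nil => exact ⟨e0, by simp [ev_zero], by simp [wt_zero], by simp [zl_zero]⟩
  | cons x l ih =>
    obtain ⟨w, h1, h2, h3⟩ := ih (fun y hy => hl y (List.mem_cons_of_mem _ hy))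
    rcases gen_word R x (hl x List.mem_cons_self) with rfl | ⟨b, rfl, hb⟩
    · refine ⟨aMul w, by rw [ev_aMul, h1, List.prod_cons], ?_, ?_⟩
      · rw [wt_aMul, List.length_cons]; omega
      · rw [zl_aMul, List.length_cons]; omega
    · refine ⟨bMul b w, by rw [ev_bMul, h1, List.prod_cons], ?_, ?_⟩
      · have := wt_bMul b w
        have := wB_le b
        rw [List.length_cons]; omega
      · have := zl_bMul b w
        rw [List.length_cons]; omega

theorem ev_sysW (w : Wd D) : ((ev (sysW S) w : WW S) : PP D Y) = ev (bigSys S) w := by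
  simp only [ev, evl, Subgroup.coe_mul, SubmonoidClass.coe_list_prod, List.map_map]
  rfl

theorem ev_big_fst (w : Wd D) (s : ℕ) : (ev (bigSys S) w).1 s = ev (liftN (S s) s) w := by
  simp only [ev, evl]
  generalize w.1 = b
  generalize w.2 = L
  induction L generalizing b with
  | nil => simp [bigSys]
  | cons c L ih =>
    simp only [List.map_cons, List.prod_cons, mul_assoc]
    have := ih c
    simp only [Prod.fst_mul, Pi.mul_apply] at this ⊢
    rw [this]; rfl

theorem ev_big_snd (w : Wd D) : (ev (bigSys S) w).2 = Multiplicative.ofAdd (zs w) := by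
  simp only [ev, evl, zs]
  generalize w.1 = b
  generalize w.2 = L
  induction L generalizing b with
  | nil => simp [bigSys]
  | cons c L ih =>
    simp only [List.map_cons, List.prod_cons, List.sum_cons, mul_assoc]
    have := ih c
    simp only [Prod.snd_mul] at this ⊢
    rw [this]
    show Multiplicative.ofAdd b.2 * (1 * _) = _
    rw [one_mul, ← ofAdd_add]

theorem ball_card [∀ s, Finite (Y s)] (m : ℕ) : ∃ C : ℝ, 0 ≤ C ∧ ∀ n A : ℕ,
    (∀ w : Wd D, wt w ≤ 18 * n → wtT m (scN m w) ≤ A) →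
    {t : Tr D m | wtT m t ≤ A ∧ zlT m t ≤ n}.Finite →
    (Nat.card (wordBall ((sysW S).T : Set (WW S)) n) : ℝ) ≤
      C * {t : Tr D m | wtT m t ≤ A ∧ zlT m t ≤ n}.ncard := by
  refine ⟨Nat.card (∀ s : Fin m, Equiv.Perm (Lv (Y s) s)), by positivity, fun n A hA hfin => ?_⟩
  set Q := {t : Tr D m | wtT m t ≤ A ∧ zlT m t ≤ n}
  have := hfin.to_subtype
  have hch : ∀ x : wordBall ((sysW S).T : Set (WW S)) n, ∃ w : Wd D, ev (sysW S) w = x.1 ∧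
    wt w ≤ 18 * n ∧ zl w ≤ n := fun x => ball_word _ n x.1 x.2
  choose f h1 h2 h3 using hch
  let F : wordBall ((sysW S).T : Set (WW S)) n → (∀ s : Fin m, Equiv.Perm (Lv (Y s) s)) × Q :=
    fun x => (fun s => x.1.1.1 s, ⟨scN m (f x), hA _ (h2 x), (zlT_scN m _).trans (h3 x)⟩)
  have hF : Function.Injective F := by
    intro x y hxy
    have e1 : ∀ s : Fin m, x.1.1.1 s = y.1.1.1 s := fun s => congrFun (congrArg Prod.fst hxy) s
    have e2 : scN m (f x) = scN m (f y) := congrArg (fun p => p.2.1) hxy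
    have ex : ∀ x, (x.1.1 : PP D Y) = ev (bigSys S) (f x) := fun x => by rw [← ev_sysW, h1]
    refine Subtype.ext (Subtype.ext (Prod.ext (funext fun s => ?_) ?_))
    · by_cases hs : s < m
      · exact e1 ⟨s, hs⟩
      · rw [ex x, ex y, ev_big_fst, ev_big_fst]
        exact ev_liftN_congr (S s) m s (by omega) _ _ e2
    · rw [ex x, ex y, ev_big_snd, ev_big_snd, ← zsT_scN m, ← zsT_scN m, e2]
  have := Nat.card_le_card_of_injective F hF
  rw [Nat.card_prod] at this
  exact_mod_cast this

theorem subexp [∀ s, Finite (Y s)] : SubexpGrowth ((sysW S).T : Set (WW S)) := by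
  intro lam hlam
  -- ρ ^ 3 = lam
  set ρ : ℝ := lam ^ (1 / 3 : ℝ) with hρ
  have hρ1 : 1 < ρ := Real.one_lt_rpow hlam (by norm_num)
  have hρ3 : ρ ^ 3 = lam := by
    rw [hρ, ← Real.rpow_natCast, ← Real.rpow_mul (by linarith)]; norm_num
  obtain ⟨μ, hμ, hcount⟩ := count_Tr D ρ hρ1
  -- choose m
  obtain ⟨m, hm⟩ : ∃ m : ℕ, μ ^ (18 * (9 / 10 : ℝ) ^ m) ≤ ρ := by
    have t1 : Filter.Tendsto (fun m : ℕ => 18 * (9 / 10 : ℝ) ^ m) Filter.atTop (nhds (18 * 0)) :=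
      (tendsto_pow_atTop_nhds_zero_of_lt_one (by norm_num) (by norm_num)).const_mul 18
    have t2 : Filter.Tendsto (fun m : ℕ => μ ^ (18 * (9 / 10 : ℝ) ^ m)) Filter.atTop
        (nhds (μ ^ (18 * 0 : ℝ))) :=
      (Real.continuousAt_const_rpow (by positivity)).tendsto.comp t1
    rw [mul_zero, Real.rpow_zero] at t2
    obtain ⟨m, hm⟩ := (t2.eventually (gt_mem_nhds hρ1)).exists
    exact ⟨m, le_of_lt hm⟩
  obtain ⟨Z, hZ0, hZ⟩ := hcount m
  obtain ⟨C, hC0, hC⟩ := wtT_scN D m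
  obtain ⟨E, hE0, hE⟩ := ball_card S m
  have hμ0 : 0 < μ := by linarith
  have hρ0 : 0 < ρ := by linarith
  set K : ℝ := E * (Z * μ ^ C) with hK
  have bound : ∀ n : ℕ, (Nat.card (wordBall ((sysW S).T : Set (WW S)) n) : ℝ) ≤ K * (ρ ^ 2) ^ n := by
    intro n
    set A : ℕ := ⌊(9 / 10 : ℝ) ^ m * (18 * n) + C⌋₊ with hAdef
    have hA : ∀ w : Wd D, wt w ≤ 18 * n → wtT m (scN m w) ≤ A := by
      intro w hw
      refine Nat.le_floor ((hC w).trans ?_)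
      have : (wt w : ℝ) ≤ 18 * n := by exact_mod_cast hw
      gcongr
    have hAle : (A : ℝ) ≤ (9 / 10 : ℝ) ^ m * (18 * n) + C := Nat.floor_le (by positivity)
    have hμA : μ ^ A ≤ ρ ^ n * μ ^ C := by
      calc μ ^ A = μ ^ (A : ℝ) := (Real.rpow_natCast _ _).symm
        _ ≤ μ ^ ((9 / 10 : ℝ) ^ m * (18 * n) + C) := Real.rpow_le_rpow_of_exponent_le hμ hAle
        _ = (μ ^ (18 * (9 / 10 : ℝ) ^ m)) ^ n * μ ^ C := by
          rw [Real.rpow_add hμ0, ← Real.rpow_natCast (μ ^ (18 * (9 / 10 : ℝ) ^ m)) n, ← Real.rpow_mul hμ0.le]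
          congr 2; ring
        _ ≤ ρ ^ n * μ ^ C := by gcongr
    calc _ ≤ E * {t : Tr D m | wtT m t ≤ A ∧ zlT m t ≤ n}.ncard := hE n A hA (hZ A n).1
      _ ≤ E * (Z * μ ^ A * ρ ^ n) := by gcongr; exact (hZ A n).2
      _ ≤ E * (Z * (ρ ^ n * μ ^ C) * ρ ^ n) := by gcongr
      _ = K * (ρ ^ 2) ^ n := by rw [hK, ← pow_mul, two_mul, pow_add]; ring
  have hbig : ∀ᶠ n : ℕ in Filter.atTop, K < ρ ^ n :=
    (tendsto_pow_atTop_atTop_of_one_lt hρ1).eventually_gt_atTop K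
  filter_upwards [hbig] with n hn
  calc _ ≤ K * (ρ ^ 2) ^ n := bound n
    _ < ρ ^ n * (ρ ^ 2) ^ n := by gcongr
    _ = lam ^ n := by rw [← hρ3, ← mul_pow]; congr 1; ring

end big


section conj
variable {D : ℕ}

def vk : ℕ → VV
  | 0 => (1, 0)
  | k + 1 => usV (vk k)

/-- The element `σ^k(a)`, lifting `a` to level `k`. -/
def xk {G : Type} [Group G] (R : Sys D G) : ℕ → G
  | 0 => R.a
  | k + 1 => xk R k * R.act (vk k, 0) * xk R k

def kk {G : Type} [Group G] (R : Sys D G) (s : ℕ) (z : Fin D → ℤ) : G :=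
  (xk R s)⁻¹ * R.act (0, z) * xk R s

def cj {G : Type} [Group G] (R : Sys D G) (s : ℕ) (z y : Fin D → ℤ) : G :=
  kk R s z * R.act (0, y) * (kk R s z)⁻¹

theorem map_xk {G G' : Type} [Group G] [Group G'] (R : Sys D G) (R' : Sys D G') (f : G →* G')
    (ha : f R.a = R'.a) (hb : ∀ b, f (R.act b) = R'.act b) (k : ℕ) : f (xk R k) = xk R' k := by
  induction k with
  | zero => exact ha
  | succ k ih => simp [xk, ih, hb]

theorem map_cj {G G' : Type} [Group G] [Group G'] (R : Sys D G) (R' : Sys D G') (f : G →* G')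
    (ha : f R.a = R'.a) (hb : ∀ b, f (R.act b) = R'.act b) (s : ℕ) (z y : Fin D → ℤ) :
    f (cj R s z y) = cj R' s z y := by
  simp [cj, kk, map_xk R R' f ha hb, hb]

theorem cj_of_trivial {G : Type} [Group G] (R : Sys D G) (s : ℕ) (z y : Fin D → ℤ)
    (h : R.act (0, z) = 1) : cj R s z y = R.act (0, y) := by
  simp [cj, kk, h]

theorem lift_act0 {Y : Type} (R : Sys D (Equiv.Perm Y)) (y : Fin D → ℤ) :
    R.lift.act (0, y) = pr 1 (R.act (0, y)) := by
  simp [Sys.lift, shB, (shV_zero 0).2 rfl]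

theorem xk_lift {Y : Type} (R : Sys D (Equiv.Perm Y)) (k : ℕ) (y : Y) :
    xk R.lift (k + 1) (true, y) = (true, xk R k y) := by
  induction k generalizing y with
  | zero => simp [xk, vk, Sys.lift]
  | succ k ih =>
    have e : xk R.lift (k + 2) = xk R.lift (k + 1) * R.lift.act (vk (k + 1), 0) * xk R.lift (k + 1) :=
      rfl
    have e2 : ∀ y, R.lift.act (vk (k + 1), 0) (true, y) = (true, R.act (vk k, 0) y) := by
      intro y
      simp [Sys.lift, shB, vk, shV_usV]
    rw [e, show xk R (k + 1) = xk R k * R.act (vk k, 0) * xk R k from rfl]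
    simp only [Equiv.Perm.mul_apply, ih, e2]

theorem inv_true {Y : Type} (κ : Equiv.Perm (Bool × Y)) (κ' : Equiv.Perm Y)
    (h : ∀ y, κ (true, y) = (true, κ' y)) (y : Y) : κ⁻¹ (true, y) = (true, κ'⁻¹ y) := by
  rw [Equiv.Perm.inv_eq_iff_eq, h]; simp

theorem kk_lift {Y : Type} (R : Sys D (Equiv.Perm Y)) (k : ℕ) (z : Fin D → ℤ) (y : Y) :
    kk R.lift (k + 1) z (true, y) = (true, kk R k z y) := by
  simp only [kk, Equiv.Perm.mul_apply, xk_lift, lift_act0, pr_true]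
  rw [inv_true _ _ (xk_lift R k)]

theorem conj_pr {Y : Type} (κ : Equiv.Perm (Bool × Y)) (κ' φ : Equiv.Perm Y)
    (h : ∀ y, κ (true, y) = (true, κ' y)) : κ * pr 1 φ * κ⁻¹ = pr 1 (κ' * φ * κ'⁻¹) := by
  rw [mul_inv_eq_iff_eq_mul]
  ext1 ⟨i, y⟩
  cases i
  · have : ∃ y', κ (false, y) = (false, y') := by
      rcases hh : κ (false, y) with ⟨i, y'⟩
      cases i
      · exact ⟨y', rfl⟩
      · have h2 := h (κ'⁻¹ y')
        rw [show κ' (κ'⁻¹ y') = y' by simp, ← hh] at h2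
        have := κ.injective h2
        simp at this
    obtain ⟨y', hy'⟩ := this
    simp [hy']
  · simp [h]

theorem cj_lift_succ {Y : Type} (R : Sys D (Equiv.Perm Y)) (k : ℕ) (z y : Fin D → ℤ) :
    cj R.lift (k + 1) z y = pr 1 (cj R k z y) := by
  unfold cj
  rw [lift_act0]
  exact conj_pr _ _ _ (kk_lift R k z)

theorem cj_lift_zero {Y : Type} (R : Sys D (Equiv.Perm Y)) (z y : Fin D → ℤ) :
    cj R.lift 0 z y = R.lift.act (0, y) := by
  unfold cj
  rw [lift_act0, conj_pr _ 1]
  · simp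
  · intro y
    simp only [kk, xk, Equiv.Perm.mul_apply, lift_act0, Sys.a_inv]
    simp [Sys.lift]

theorem cj_liftN_lt {Y : Type} (S : Sys D (Equiv.Perm Y)) (s j : ℕ) (h : s < j)
    (z y : Fin D → ℤ) : cj (liftN S j) s z y = (liftN S j).act (0, y) := by
  induction s generalizing j with
  | zero =>
    obtain ⟨j, rfl⟩ : ∃ j', j = j' + 1 := ⟨j - 1, by omega⟩
    exact cj_lift_zero _ _ _
  | succ s ih =>
    obtain ⟨j, rfl⟩ : ∃ j', j = j' + 1 := ⟨j - 1, by omega⟩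
    have e1 : cj (liftN S (j + 1)) (s + 1) z y = pr 1 (cj (liftN S j) s z y) := cj_lift_succ _ _ _ _
    have e2 : (liftN S (j + 1)).act (0, y) = pr 1 ((liftN S j).act (0, y)) := lift_act0 _ _
    rw [e1, e2, ih j (by omega)]

def prHom (Y : Type) : Equiv.Perm Y →* Equiv.Perm (Bool × Y) where
  toFun := pr 1
  map_one' := pr_one
  map_mul' p q := by rw [← pr_mul, one_mul]

def extN (Y : Type) : (k : ℕ) → Equiv.Perm Y →* Equiv.Perm (Lv Y k)
  | 0 => MonoidHom.id _
  | k + 1 => (prHom (Lv Y k)).comp (extN Y k)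

theorem cj_liftN_eq {Y : Type} (S : Sys D (Equiv.Perm Y)) (s : ℕ)
    (z y : Fin D → ℤ) : cj (liftN S s) s z y = extN Y s (cj S 0 z y) := by
  induction s with
  | zero => rfl
  | succ s ih =>
    have e1 : cj (liftN S (s + 1)) (s + 1) z y = pr 1 (cj (liftN S s) s z y) := cj_lift_succ _ _ _ _
    rw [e1, ih]; rfl

theorem liftN_act0_one {Y : Type} (S : Sys D (Equiv.Perm Y)) (j : ℕ) (z : Fin D → ℤ)
    (h : S.act (0, z) = 1) : (liftN S j).act (0, z) = 1 := by
  induction j with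
  | zero => exact h
  | succ j ih =>
    have e2 : (liftN S (j + 1)).act (0, z) = pr 1 ((liftN S j).act (0, z)) := lift_act0 _ _
    rw [e2, ih]; exact pr_one

end conj

section base
variable {H : Type} [Group H] {d : ℕ} (s : ℕ) (θ : Fin d → H)

abbrev MM (d s : ℕ) : ℕ := (d + 1) ^ (s + 1)
abbrev BY (H : Type) (d s : ℕ) : Type := Bool × (ZMod (MM d s) × H)

instance (d s : ℕ) : NeZero (MM d s) := ⟨by unfold MM; positivity⟩

def pos {d : ℕ} (s : ℕ) (t : Fin d) : ZMod (MM d s) := ((d + 1) ^ s * (t : ℕ) : ℕ)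

theorem pos_inj : Function.Injective (pos s : Fin d → ZMod (MM d s)) := by
  intro t t' h
  have hlt : ∀ t : Fin d, (d + 1) ^ s * (t : ℕ) < MM d s := by
    intro t
    unfold MM
    rw [pow_succ]
    exact Nat.mul_lt_mul_of_pos_left (by omega) (by positivity)
  have := (ZMod.natCast_eq_natCast_iff' _ _ _).1 h
  rw [Nat.mod_eq_of_lt (hlt t), Nat.mod_eq_of_lt (hlt t')] at this
  exact Fin.ext (Nat.eq_of_mul_eq_mul_left (by positivity) this)

open Classical in
noncomputable def qq (p : ZMod (MM d s)) : Option (Fin d) :=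
  if h : ∃ t, pos s t = p then some h.choose else none

theorem qq_pos (t : Fin d) : qq s (pos s t) = some t := by
  have h : ∃ t', pos s t' = pos s t := ⟨t, rfl⟩
  rw [qq, dif_pos h]
  exact congrArg some (pos_inj s h.choose_spec)

theorem pos_qq (t : Fin d) (p : ZMod (MM d s)) (h : qq s p = some t) : p = pos s t := by
  unfold qq at h
  split_ifs at h with hh
  rw [← Option.some.inj h]; exact hh.choose_spec.symm

noncomputable def tv (z : Fin (d + 1) → ℤ) (p : ZMod (MM d s)) : H :=
  match qq s p with
  | none => 1
  | some t => θ t ^ z t.succ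

theorem tv_add (z y : Fin (d + 1) → ℤ) (p : ZMod (MM d s)) :
    tv s θ (z + y) p = tv s θ z p * tv s θ y p := by
  unfold tv
  cases qq s p <;> simp [zpow_add]

open Classical in
theorem tv_single (t : Fin d) (k : ℤ) (p : ZMod (MM d s)) :
    tv s θ (Pi.single t.succ k) p = if p = pos s t then θ t ^ k else 1 := by
  unfold tv
  split_ifs with h
  · rw [h, qq_pos]; simp
  · cases hq : qq s p with
    | none => rfl
    | some t' =>
      have := pos_qq s t' p hq
      have hne : t' ≠ t := by rintro rfl; exact h this
      have : t'.succ ≠ t.succ := fun e => hne (Fin.succ_injective _ e)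
      simp [this]

theorem tv_single0 (k : ℤ) (p : ZMod (MM d s)) :
    tv s θ (Pi.single 0 k) p = 1 := by
  unfold tv
  cases hq : qq s p with
  | none => rfl
  | some t' => simp [Pi.single_apply]

/-- multiplication by a function of the position -/
def lmul (f : ZMod (MM d s) → H) : Equiv.Perm (ZMod (MM d s) × H) :=
  Equiv.prodCongrRight (fun p => Equiv.mulLeft (f p))

@[simp] theorem lmul_apply (f : ZMod (MM d s) → H) (p : ZMod (MM d s)) (h : H) :
    lmul s f (p, h) = (p, f p * h) := rfl

def trn (H : Type) (d s : ℕ) (k : ℤ) : Equiv.Perm (ZMod (MM d s) × H) :=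
  (Equiv.addRight (k : ZMod (MM d s))).prodCongr (Equiv.refl H)

@[simp] theorem trn_apply (k : ℤ) (p : ZMod (MM d s)) (h : H) :
    trn H d s k (p, h) = (p + k, h) := rfl

noncomputable def baseSys : Sys (d + 1) (Equiv.Perm (BY H d s)) where
  a := swp _
  ha := by ext1 ⟨i, y⟩; simp
  act b := pr (trn H d s (b.2 0)) (lmul s (tv s θ b.2))
  act_add x y := by
    rw [← pr_mul]
    congr 1
    · ext1 ⟨p, h⟩
      simp [add_comm, add_left_comm]
    · ext1 ⟨p, h⟩
      simp [tv_add, mul_assoc]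

open Classical in
noncomputable def dl (H : Type) [Group H] (d s : ℕ) : H →* Equiv.Perm (BY H d s) where
  toFun h := pr 1 (lmul s (fun p => if p = 0 then h else 1))
  map_one' := by
    ext1 ⟨i, p, h⟩; cases i <;> simp
  map_mul' x y := by
    ext1 ⟨i, p, h⟩; cases i
    · simp
    · by_cases hp : p = 0 <;> simp [hp, mul_assoc]

/-- the translation vector used for the `t`-th generator -/
def zt {d : ℕ} (s : ℕ) (t : Fin d) : Fin (d + 1) → ℤ :=
  Pi.single 0 (-(((d + 1) ^ s * (t : ℕ) : ℕ) : ℤ))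

theorem base_act_zt (j : ℕ) (hj : j < s) (t : Fin d) : (baseSys j θ).act (0, zt s t) = 1 := by
  have hz : ((-(((d + 1) ^ s * (t : ℕ) : ℕ) : ℤ) : ℤ) : ZMod (MM d j)) = 0 := by
    rw [Int.cast_neg, Int.cast_natCast, neg_eq_zero, ZMod.natCast_eq_zero_iff]
    exact Dvd.dvd.mul_right (pow_dvd_pow _ (by omega)) _
  ext1 ⟨i, p, h⟩
  cases i
  · simp only [baseSys, pr_false, trn_apply, zt, Pi.single_eq_same, hz]
    simp
  · simp [baseSys, zt, tv_single0]

theorem base_cj (t : Fin d) :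
    cj (baseSys s θ) 0 (zt s t) (Pi.single t.succ 1) = dl H d s (θ t) := by
  have hk : kk (baseSys s θ) 0 (zt s t) = 
      pr 1 (trn H d s (-(((d + 1) ^ s * (t : ℕ) : ℕ) : ℤ))) := by
    ext1 ⟨i, p, h⟩
    simp only [kk, xk, Equiv.Perm.mul_apply, Sys.a_inv]
    cases i
    · simp [baseSys, zt, tv_single0]
    · simp [baseSys, zt]
  have hact : (baseSys s θ).act (0, Pi.single t.succ 1) =
      pr 1 (lmul s (tv s θ (Pi.single t.succ 1))) := by
    ext1 ⟨i, p, h⟩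
    cases i <;> simp [baseSys]
  unfold cj
  rw [hk, hact, mul_inv_eq_iff_eq_mul]
  ext1 ⟨i, p, h⟩
  cases i
  · simp [dl]
  · have : ((-(((d + 1) ^ s * (t : ℕ) : ℕ) : ℤ) : ℤ) : ZMod (MM d s)) = - pos s t := by
      rw [Int.cast_neg, Int.cast_natCast]; rfl
    simp only [dl, pr_true, Equiv.Perm.mul_apply, lmul_apply, trn_apply, this, tv_single,
      MonoidHom.coe_mk, OneHom.coe_mk, add_neg_eq_zero]
    by_cases hp : p = pos s t <;> simp [hp]

end base


section upper
variable {d : ℕ} (Hf : ℕ → Type) [∀ s, Group (Hf s)] (θ : ∀ s, Fin d → Hf s)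

/-- The sequence of base systems. -/
noncomputable abbrev SS (s : ℕ) : Sys (d + 1) (Equiv.Perm (BY (Hf s) d s)) := baseSys s (θ s)

noncomputable abbrev ΦΦ (s : ℕ) : FreeGroup (Fin d) →* WW (SS Hf θ) :=
  FreeGroup.lift (fun t => cj (sysW (SS Hf θ)) s (zt s t) (Pi.single t.succ 1))

noncomputable def prj (j : ℕ) : WW (SS Hf θ) →* Equiv.Perm (Lv (BY (Hf j) d j) j) :=
  ((Pi.evalMonoidHom _ j).comp (MonoidHom.fst _ _)).comp (WW (SS Hf θ)).subtype

noncomputable def prz : WW (SS Hf θ) →* Multiplicative (Fin (d + 1) → ℤ) :=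
  (MonoidHom.snd _ _).comp (WW (SS Hf θ)).subtype

theorem prj_cj (j s : ℕ) (z y : Fin (d + 1) → ℤ) :
    prj Hf θ j (cj (sysW (SS Hf θ)) s z y) = cj (liftN (SS Hf θ j) j) s z y :=
  map_cj _ _ _ rfl (fun _ => rfl) _ _ _

theorem comm_ker {A B : Type} [Group A] [Group B] (f : A →* B) {C : Type} [CommGroup C]
    (g : A →* C) (k : C →* B) (h : f = k.comp g) (w : A) (hw : w ∈ commutator A) : f w = 1 := by
  have : w ∈ g.ker := Abelianization.commutator_subset_ker g hw
  rw [h, MonoidHom.comp_apply, (MonoidHom.mem_ker).1 this, map_one]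

theorem prj_ΦΦ_ne (j s : ℕ) (hj : j ≠ s) (w : FreeGroup (Fin d))
    (hw : w ∈ commutator (FreeGroup (Fin d))) : prj Hf θ j (ΦΦ Hf θ s w) = 1 := by
  refine comm_ker ((prj Hf θ j).comp (ΦΦ Hf θ s))
    (FreeGroup.lift (fun t : Fin d => Multiplicative.ofAdd ((0, Pi.single t.succ 1) : BB (d + 1))))
    (liftN (SS Hf θ j) j).hom ?_ w hw
  ext t
  simp only [MonoidHom.comp_apply, FreeGroup.lift_apply_of, prj_cj, Sys.hom, MonoidHom.coe_mk,
    OneHom.coe_mk, toAdd_ofAdd]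
  rcases lt_or_gt_of_ne hj with h | h
  · rw [cj_of_trivial _ _ _ _ (liftN_act0_one _ _ _ (base_act_zt s (θ j) j h t))]
  · rw [cj_liftN_lt _ _ _ h]

theorem prj_ΦΦ_eq (s : ℕ) (w : FreeGroup (Fin d)) :
    prj Hf θ s (ΦΦ Hf θ s w) = extN _ s (dl (Hf s) d s (FreeGroup.lift (θ s) w)) := by
  have : (prj Hf θ s).comp (ΦΦ Hf θ s) =
      ((extN _ s).comp (dl (Hf s) d s)).comp (FreeGroup.lift (θ s)) := by
    apply FreeGroup.ext_hom
    intro t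
    simp only [MonoidHom.comp_apply, FreeGroup.lift_apply_of, prj_cj]
    rw [cj_liftN_eq, base_cj]
  exact DFunLike.congr_fun this w

theorem prz_ΦΦ (s : ℕ) (w : FreeGroup (Fin d))
    (hw : w ∈ commutator (FreeGroup (Fin d))) : prz Hf θ (ΦΦ Hf θ s w) = 1 :=
  comm_ker ((prz Hf θ).comp (ΦΦ Hf θ s)) ((prz Hf θ).comp (ΦΦ Hf θ s)) (MonoidHom.id _) rfl w hw

/-- the embedding of `H_s` in the big product. -/
noncomputable def psi0 (s : ℕ) : Hf s →* PP (d + 1) (fun s => BY (Hf s) d s) :=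
  (MonoidHom.inl _ _).comp
    ((MonoidHom.mulSingle (fun s => Equiv.Perm (Lv (BY (Hf s) d s) s)) s).comp
      ((extN _ s).comp (dl (Hf s) d s)))

theorem coe_ΦΦ (s : ℕ) (w : FreeGroup (Fin d)) (hw : w ∈ commutator (FreeGroup (Fin d))) :
    ((ΦΦ Hf θ s w : WW (SS Hf θ)) : PP (d + 1) (fun s => BY (Hf s) d s)) =
      psi0 Hf s (FreeGroup.lift (θ s) w) := by
  refine Prod.ext (funext fun j => ?_) ?_
  · have e : ((ΦΦ Hf θ s w : WW (SS Hf θ)) : PP (d + 1) (fun s => BY (Hf s) d s)).1 j =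
      prj Hf θ j (ΦΦ Hf θ s w) := rfl
    rw [e]
    by_cases hj : j = s
    · subst hj
      rw [prj_ΦΦ_eq]
      simp [psi0]
    · rw [prj_ΦΦ_ne Hf θ j s hj w hw]
      simp [psi0, hj]
  · exact prz_ΦΦ Hf θ s w hw

theorem extN_inj (Y : Type) (k : ℕ) : Function.Injective (extN Y k) := by
  induction k with
  | zero => exact Function.injective_id
  | succ k ih =>
    have : Function.Injective (prHom (Lv Y k)) := by
      intro p q h
      ext1 y
      have := DFunLike.congr_fun h (true, y)
      exact (Prod.ext_iff.1 this).2
    exact this.comp ih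

theorem dl_inj (H : Type) [Group H] (d s : ℕ) : Function.Injective (dl H d s) := by
  intro p q h
  have := DFunLike.congr_fun h (true, 0, 1)
  simpa [dl] using this

theorem psi0_inj (s : ℕ) : Function.Injective (psi0 (d := d) Hf s) := by
  intro p q h
  have h1 := congrFun (congrArg Prod.fst h) s
  simp only [psi0, MonoidHom.comp_apply, MonoidHom.inl_apply, MonoidHom.mulSingle_apply,
    Pi.mulSingle_eq_same] at h1
  exact dl_inj _ _ _ (extN_inj _ _ h1)

theorem commutator_lift {H : Type} [Group H] (θ : Fin d → H)
    (hθ : Subgroup.closure (Set.range θ) = ⊤) (h : H) (hh : h ∈ commutator H) :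
    ∃ w ∈ commutator (FreeGroup (Fin d)), FreeGroup.lift θ w = h := by
  have hr : (FreeGroup.lift θ).range = ⊤ := by
    rw [FreeGroup.range_lift_eq_closure, hθ]
  have : (commutator (FreeGroup (Fin d))).map (FreeGroup.lift θ) = commutator H := by
    rw [commutator_def, commutator_def, Subgroup.map_commutator, ← MonoidHom.range_eq_map, hr]
  rw [← this] at hh
  exact hh

/-- The embedding of the derived subgroup. -/
noncomputable def Psi (s : ℕ) (hθ : Subgroup.closure (Set.range (θ s)) = ⊤) :
    commutator (Hf s) →* WW (SS Hf θ) :=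
  ((psi0 Hf s).comp (commutator (Hf s)).subtype).codRestrict _ (by
    intro h
    obtain ⟨w, hw, e⟩ := commutator_lift (θ s) hθ h h.2
    have := coe_ΦΦ Hf θ s w hw
    simp only [MonoidHom.comp_apply, Subgroup.subtype_apply]
    rw [← e, ← this]
    exact Subtype.coe_prop _)

theorem coe_Psi (s : ℕ) (hθ : Subgroup.closure (Set.range (θ s)) = ⊤) (h : commutator (Hf s)) :
    (Psi Hf θ s hθ h : PP (d + 1) (fun s => BY (Hf s) d s)) = psi0 Hf s h := rfl

theorem Psi_inj (s : ℕ) (hθ : Subgroup.closure (Set.range (θ s)) = ⊤) :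
    Function.Injective (Psi Hf θ s hθ) := by
  intro p q h
  exact Subtype.ext (psi0_inj Hf s (congrArg Subtype.val h))

end upper

section balls
variable {G : Type} [Group G] {S : Set G}

theorem wball_one (n : ℕ) : (1 : G) ∈ wordBall S n := ⟨[], by simp, by simp, rfl⟩

theorem wball_mono {n m : ℕ} (h : n ≤ m) {x : G} (hx : x ∈ wordBall S n) : x ∈ wordBall S m := by
  obtain ⟨l, h1, h2, h3⟩ := hx
  exact ⟨l, h1, h2.trans h, h3⟩

theorem wball_mul {n m : ℕ} {x y : G} (hx : x ∈ wordBall S n) (hy : y ∈ wordBall S m) :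
    x * y ∈ wordBall S (n + m) := by
  obtain ⟨l, h1, h2, rfl⟩ := hx
  obtain ⟨l', h1', h2', rfl⟩ := hy
  refine ⟨l ++ l', ?_, ?_, by simp⟩
  · intro x hx
    rcases List.mem_append.1 hx with h | h
    exacts [h1 x h, h1' x h]
  · rw [List.length_append]; omega

theorem wball_inv {n : ℕ} {x : G} (hx : x ∈ wordBall S n) : x⁻¹ ∈ wordBall S n := by
  obtain ⟨l, h1, h2, rfl⟩ := hx
  refine ⟨(l.map (·⁻¹)).reverse, ?_, by simpa using h2, by rw [List.prod_inv_reverse]⟩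
  intro x hx
  simp only [List.mem_reverse, List.mem_map] at hx
  obtain ⟨y, hy, rfl⟩ := hx
  rw [inv_inv]
  exact (h1 y hy).symm

theorem wball_gen {x : G} (hx : x ∈ S) : x ∈ wordBall S 1 :=
  ⟨[x], by simp [hx], by simp, by simp⟩

theorem wball_pow {n : ℕ} {x : G} (hx : x ∈ wordBall S n) (k : ℕ) : x ^ k ∈ wordBall S (k * n) := by
  induction k with
  | zero => simpa using wball_one 0
  | succ k ih =>
    rw [pow_succ, add_mul, one_mul]
    exact wball_mul ih hx

theorem norm_le_of_ball {n : ℕ} {x : G} (hx : x ∈ wordBall S n) : wordNorm S x ≤ n := by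
  obtain ⟨l, h1, h2, h3⟩ := hx
  have : wordNorm S x ≤ l.length := Nat.sInf_le ⟨l, h1, rfl, h3⟩
  exact this.trans h2

theorem exists_ball (hS : Subgroup.closure S = ⊤) (x : G) : ∃ n, x ∈ wordBall S n := by
  have hx : x ∈ Subgroup.closure S := hS ▸ Subgroup.mem_top x
  induction hx using Subgroup.closure_induction with
  | mem x h => exact ⟨1, wball_gen h⟩
  | one => exact ⟨0, wball_one 0⟩
  | mul x y _ _ hx hy =>
    obtain ⟨n, hn⟩ := hx
    obtain ⟨m, hm⟩ := hy
    exact ⟨_, wball_mul hn hm⟩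
  | inv x _ hx =>
    obtain ⟨n, hn⟩ := hx
    exact ⟨_, wball_inv hn⟩

theorem mem_ball_norm (hS : Subgroup.closure S = ⊤) (x : G) :
    x ∈ wordBall S (wordNorm S x) := by
  obtain ⟨n, l, h1, h2, h3⟩ := exists_ball hS x
  have hne : {n | ∃ l : List G, (∀ x ∈ l, x ∈ S ∨ x⁻¹ ∈ S) ∧ l.length = n ∧ l.prod = x}.Nonempty :=
    ⟨_, l, h1, rfl, h3⟩
  obtain ⟨l, h1, h2, h3⟩ := Nat.sInf_mem hne
  exact ⟨l, h1, h2.le, h3⟩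

variable {d : ℕ} (R : Sys (d + 1) G)

theorem wball_xk (k : ℕ) : xk R k ∈ wordBall (R.T : Set G) (3 ^ (k + 1)) := by
  suffices h : ∃ n, xk R k ∈ wordBall (R.T : Set G) n ∧ 2 * n + 1 ≤ 3 ^ (k + 1) by
    obtain ⟨n, h1, h2⟩ := h
    exact wball_mono (by omega) h1
  induction k with
  | zero => exact ⟨1, wball_gen ((R.mem_T _).2 ⟨none, rfl⟩), by norm_num⟩
  | succ k ih =>
    obtain ⟨n, h1, h2⟩ := ih
    refine ⟨n + 1 + n, wball_mul (wball_mul h1 (wball_gen ((R.mem_T _).2 ⟨some (Sum.inl _), rfl⟩))) h1, ?_⟩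
    rw [pow_succ]; 
    have : 3 ≤ 3 ^ (k + 1) := by rw [pow_succ]; have := Nat.one_le_pow k 3 (by norm_num); omega
    omega

theorem act_single_pow (i : Fin (d + 1)) (k : ℕ) :
    R.act (0, Pi.single i (k : ℤ)) = R.act (0, Pi.single i 1) ^ k := by
  induction k with
  | zero => simp; exact R.act_zero
  | succ k ih =>
    rw [pow_succ, ← ih, ← R.act_add]
    congr 1
    simp [Pi.single_add]

theorem wball_zt (s : ℕ) (t : Fin d) :
    R.act (0, zt s t) ∈ wordBall (R.T : Set G) ((d + 1) ^ s * d) := by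
  have : ((0, zt s t) : BB (d + 1)) = - (0, Pi.single 0 (((d + 1) ^ s * (t : ℕ) : ℕ) : ℤ)) := by
    simp only [zt, Prod.neg_mk, neg_zero, ← Pi.single_neg]
  rw [this, R.act_neg, act_single_pow]
  refine wball_inv (wball_mono ?_
    (wball_pow (wball_gen ((R.mem_T _).2 ⟨some (Sum.inr 0), rfl⟩)) _))
  rw [mul_one]
  exact Nat.mul_le_mul_left _ t.2.le

def CC (d s : ℕ) : ℕ := 2 * (2 * 3 ^ (s + 1) + (d + 1) ^ s * d) + 1

theorem wball_cj (s : ℕ) (t : Fin d) :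
    cj R s (zt s t) (Pi.single t.succ 1) ∈ wordBall (R.T : Set G) (CC d s) := by
  have hk : kk R s (zt s t) ∈ wordBall (R.T : Set G) (3 ^ (s + 1) + (d + 1) ^ s * d + 3 ^ (s + 1)) :=
    wball_mul (wball_mul (wball_inv (wball_xk R s)) (wball_zt R s t)) (wball_xk R s)
  refine wball_mono ?_ (wball_mul (wball_mul hk
    (wball_gen ((R.mem_T _).2 ⟨some (Sum.inr t.succ), rfl⟩))) (wball_inv hk))
  unfold CC
  omega

theorem wball_lift (f : Fin d → G) (n : ℕ) (hf : ∀ t, f t ∈ wordBall S n)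
    (L : List (Fin d × Bool)) : FreeGroup.lift f (FreeGroup.mk L) ∈ wordBall S (n * L.length) := by
  rw [FreeGroup.lift_mk]
  induction L with
  | nil => simpa using wball_one 0
  | cons x L ih =>
    rw [List.map_cons, List.prod_cons, List.length_cons, mul_add, add_comm, mul_one]
    refine wball_mul ?_ ih
    cases x.2
    · exact wball_inv (hf _)
    · exact hf _

end balls

section perf
variable {d : ℕ}

def pset {H : Type} [Group H] (θ : Fin d → H) (h : H) : Set ℕ :=
  {n | ∃ L : List (Fin d × Bool), FreeGroup.mk L ∈ commutator (FreeGroup (Fin d)) ∧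
    L.length = n ∧ FreeGroup.lift θ (FreeGroup.mk L) = h}

theorem pset_aux {H α β : Type} [Group H] (e : α ≃ β) (θ : α → H) (θ' : β → H)
    (he : ∀ x, θ' (e x) = θ x) (h : H) (n : ℕ) 
    (hn : ∃ L : List (α × Bool), FreeGroup.mk L ∈ commutator (FreeGroup α) ∧
    L.length = n ∧ FreeGroup.lift θ (FreeGroup.mk L) = h) :
    ∃ L : List (β × Bool), FreeGroup.mk L ∈ commutator (FreeGroup β) ∧
    L.length = n ∧ FreeGroup.lift θ' (FreeGroup.mk L) = h := by
  obtain ⟨L, h1, h2, h3⟩ := hn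
  have hm : FreeGroup.map e (FreeGroup.mk L) = FreeGroup.mk (L.map fun x => (e x.1, x.2)) := by
    rw [FreeGroup.map.mk]
  refine ⟨L.map fun x => (e x.1, x.2), ?_, by simpa using h2, ?_⟩
  · rw [← hm]
    have : (commutator (FreeGroup α)).map (FreeGroup.map e) ≤ commutator (FreeGroup β) := by
      rw [commutator_def, commutator_def, Subgroup.map_commutator]
      exact Subgroup.commutator_mono le_top le_top
    exact this ⟨_, h1, rfl⟩
  · rw [← h3, FreeGroup.lift_mk, FreeGroup.lift_mk, List.map_map]
    congr 2
    funext x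
    simp [he]

theorem perfectNorm_eq {H : Type} [Group H] (T : Set H) (e : Fin d ≃ T) (h : H) :
    perfectNorm T h = sInf (pset (fun t => (e t : H)) h) := by
  unfold perfectNorm pset
  congr 1
  ext n
  constructor
  · exact pset_aux e.symm (fun t : T => (t : H)) _ (by simp) h n
  · exact pset_aux e _ (fun t : T => (t : H)) (by simp) h n

theorem pset_nonempty {H : Type} [Group H] (θ : Fin d → H)
    (hθ : Subgroup.closure (Set.range θ) = ⊤) (h : H) (hh : h ∈ commutator H) :
    (pset θ h).Nonempty := by
  obtain ⟨w, hw, e⟩ := commutator_lift θ hθ h hh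
  refine ⟨_, w.toWord, ?_, rfl, ?_⟩ <;> rwa [FreeGroup.mk_toWord]

theorem upper_bound (Hf : ℕ → Type) [∀ s, Group (Hf s)] (θ : ∀ s, Fin d → Hf s) (s : ℕ)
    (hθ : Subgroup.closure (Set.range (θ s)) = ⊤) (h : commutator (Hf s)) :
    wordNorm ((sysW (SS Hf θ)).T : Set (WW (SS Hf θ))) (Psi Hf θ s hθ h) ≤
      CC d s * sInf (pset (θ s) h) := by
  obtain ⟨L, h1, h2, h3⟩ := Nat.sInf_mem (pset_nonempty (θ s) hθ h h.2)
  rw [← h2]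
  have : Psi Hf θ s hθ h = ΦΦ Hf θ s (FreeGroup.mk L) := by
    apply Subtype.ext
    rw [coe_Psi, coe_ΦΦ Hf θ s _ h1, h3]
  rw [this]
  exact norm_le_of_ball (wball_lift _ _ (fun t => wball_cj _ s t) L)

end perf


section lower
variable {d : ℕ}

def evw {H : Type} [Group H] (θ : Fin d → H) (L : List (Fin d × Bool)) : H :=
  FreeGroup.lift θ (FreeGroup.mk L)

theorem evw_nil {H : Type} [Group H] (θ : Fin d → H) : evw θ [] = 1 := by
  simp [evw, FreeGroup.lift_mk]

theorem evw_append {H : Type} [Group H] (θ : Fin d → H) (L L' : List (Fin d × Bool)) :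
    evw θ (L ++ L') = evw θ L * evw θ L' := by
  simp [evw, FreeGroup.lift_mk]

def exps (L : List (Fin d × Bool)) : Fin d → ℤ :=
  (L.map fun x => Pi.single x.1 (if x.2 then 1 else -1)).sum

theorem exps_append (L L' : List (Fin d × Bool)) : exps (L ++ L') = exps L + exps L' := by
  simp [exps]

theorem of_mk (L : List (Fin d × Bool)) :
    (Abelianization.of (FreeGroup.mk L) : Abelianization (FreeGroup (Fin d))) =
      ∏ t, (Abelianization.of (FreeGroup.of t)) ^ (exps L t) := by
  induction L with
  | nil => simp [exps]; rfl
  | cons x L ih =>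
    have e1 : (FreeGroup.mk (x :: L)) = FreeGroup.mk [x] * FreeGroup.mk L := by
      rw [FreeGroup.mul_mk]; rfl
    have e2 : exps (x :: L) = Pi.single x.1 (if x.2 then 1 else -1) + exps L := by
      simp [exps]
    rw [e1, map_mul, ih, e2]
    simp only [Pi.add_apply, zpow_add, Finset.prod_mul_distrib]
    congr 1
    rw [Finset.prod_eq_single x.1]
    · obtain ⟨t, b⟩ := x
      cases b
      · simp only [Pi.single_eq_same]
        simp only [Bool.false_eq_true, if_false, zpow_neg, zpow_one, ← map_inv]
        congr 1
      · simp only [Pi.single_eq_same, if_true, zpow_one]; rfl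
    · intro b _ hb
      simp [hb]
    · simp

theorem mk_mem (L : List (Fin d × Bool)) (h : exps L = 0) :
    FreeGroup.mk L ∈ commutator (FreeGroup (Fin d)) := by
  rw [← Abelianization.ker_of, MonoidHom.mem_ker, of_mk, h]
  simp

/-- `π` acts through a permutation of blocks and words of total length at most `n`. -/
def Good {X Y H : Type} [Group H] [Fintype X] (θ : Fin d → H) (ι : X → H → Y)
    (π : Equiv.Perm Y) (n : ℕ) (e : Fin d → ℤ) : Prop :=
  ∃ (σ : Equiv.Perm X) (c : X → List (Fin d × Bool)),
    (∀ x h, π (ι x h) = ι (σ x) (evw θ (c x) * h)) ∧ ∑ x, (c x).length ≤ n ∧ ∑ x, exps (c x) = e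

section good
variable {X Y H : Type} [Group H] [Fintype X] (θ : Fin d → H) (ι : X → H → Y)

theorem good_free (π : Equiv.Perm Y) (σ : Equiv.Perm X) (h : ∀ x h, π (ι x h) = ι (σ x) h) :
    Good θ ι π 0 0 :=
  ⟨σ, fun _ => [], by simp [evw_nil, h], by simp, by simp [exps]⟩

theorem good_one : Good θ ι 1 0 0 := good_free θ ι 1 1 (by simp)

theorem good_mul {π π' : Equiv.Perm Y} {n n' : ℕ} {e e' : Fin d → ℤ}
    (h : Good θ ι π n e) (h' : Good θ ι π' n' e') : Good θ ι (π * π') (n + n') (e + e') := by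
  obtain ⟨σ, c, h1, h2, h3⟩ := h
  obtain ⟨σ', c', h1', h2', h3'⟩ := h'
  refine ⟨σ * σ', fun x => c (σ' x) ++ c' x, ?_, ?_, ?_⟩
  · intro x h
    simp [h1, h1', evw_append, mul_assoc]
  · simp only [List.length_append, Finset.sum_add_distrib]
    rw [Equiv.sum_comp σ' (fun x => (c x).length)]
    omega
  · simp only [exps_append, Finset.sum_add_distrib]
    rw [Equiv.sum_comp σ' (fun x => exps (c x)), h3, h3']

def iota2 (ι : X → H → Y) (x : Bool × X) (h : H) : Bool × Y := (x.1, ι x.2 h)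

theorem good_pr {π π' : Equiv.Perm Y} {n n' : ℕ} {e e' : Fin d → ℤ}
    (h : Good θ ι π n e) (h' : Good θ ι π' n' e') :
    Good θ (iota2 ι) (pr π π') (n + n') (e + e') := by
  obtain ⟨σ, c, h1, h2, h3⟩ := h
  obtain ⟨σ', c', h1', h2', h3'⟩ := h'
  refine ⟨pr σ σ', fun x => cond x.1 (c' x.2) (c x.2), ?_, ?_, ?_⟩
  · rintro ⟨i, x⟩ h
    cases i <;> simp [iota2, h1, h1']
  · rw [Fintype.sum_prod_type, Fintype.sum_bool]
    simp only [cond_true, cond_false]; omega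
  · rw [Fintype.sum_prod_type, Fintype.sum_bool]
    simp only [cond_true, cond_false]
    rw [h3, h3', add_comm]

theorem good_swp : Good θ (iota2 ι) (swp Y) 0 0 :=
  good_free _ _ _ (swp X) (by rintro ⟨i, x⟩ h; rfl)

def SysGood (R : Sys (d + 1) (Equiv.Perm Y)) : Prop :=
  Good θ ι R.a 0 0 ∧ ∀ b, Good θ ι (R.act b) (zB b) (fun t => b.2 t.succ)

theorem sysGood_lift (R : Sys (d + 1) (Equiv.Perm Y)) (h : SysGood θ ι R) :
    SysGood θ (iota2 ι) R.lift := by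
  refine ⟨good_swp θ ι, fun b => ?_⟩
  have h1 : Good θ ι (if b.1.1 = 0 then 1 else R.a) 0 0 := by
    split_ifs
    exacts [good_one θ ι, h.1]
  have := good_pr θ ι h1 (h.2 (shB b))
  rw [zero_add, zero_add] at this
  exact this

end good

section goodbase
variable {H : Type} [Group H] (s : ℕ) (θ : Fin d → H)

theorem sum_qq {M : Type} [AddCommMonoid M] (f : Option (Fin d) → M) (hf : f none = 0) :
    ∑ p : ZMod (MM d s), f (qq s p) = ∑ t, f (some t) := by
  classical
  have e1 : ∑ t : Fin d, f (some t) = ∑ t : Fin d, f (qq s (pos s t)) := by simp [qq_pos]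
  rw [e1, ← Finset.sum_image (s := Finset.univ) (g := pos s) (f := fun p => f (qq s p))
    (fun x _ y _ h => pos_inj s h)]
  symm
  refine Finset.sum_subset (Finset.subset_univ _) fun p _ hp => ?_
  cases hq : qq s p with
  | none => exact hf
  | some t => exact absurd (Finset.mem_image.2 ⟨t, Finset.mem_univ _, (pos_qq s t p hq).symm⟩) hp

/-- the word `t ^ k` -/
def pw (t : Fin d) (k : ℤ) : List (Fin d × Bool) := List.replicate k.natAbs (t, decide (0 ≤ k))

theorem evw_pw (t : Fin d) (k : ℤ) : evw θ (pw t k) = θ t ^ k := by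
  simp only [evw, FreeGroup.lift_mk, pw, List.map_replicate, List.prod_replicate]
  rcases le_or_gt 0 k with h | h
  · simp only [h, decide_true, cond_true]
    obtain ⟨n, rfl⟩ := Int.eq_ofNat_of_zero_le h
    simp
  · simp only [not_le.2 h, decide_false, cond_false]
    obtain ⟨n, rfl⟩ := Int.exists_eq_neg_ofNat h.le
    simp

theorem exps_pw (t : Fin d) (k : ℤ) : exps (pw t k) = Pi.single t k := by
  simp only [exps, pw, List.map_replicate, List.sum_replicate]
  rcases le_or_gt 0 k with h | h
  · obtain ⟨n, rfl⟩ := Int.eq_ofNat_of_zero_le h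
    rw [← Pi.single_smul]; simp
  · simp only [not_le.2 h, decide_false]
    obtain ⟨n, rfl⟩ := Int.exists_eq_neg_ofNat h.le
    rw [← Pi.single_smul]; simp

def cw (z : Fin (d + 1) → ℤ) : Option (Fin d) → List (Fin d × Bool)
  | none => []
  | some t => pw t (z t.succ)

theorem evw_cw (z : Fin (d + 1) → ℤ) (p : ZMod (MM d s)) : evw θ (cw z (qq s p)) = tv s θ z p := by
  unfold tv
  cases qq s p with
  | none => exact evw_nil θ
  | some t => exact evw_pw θ t _

theorem good_lmul (z : Fin (d + 1) → ℤ) :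
    Good θ (fun (p : ZMod (MM d s)) (h : H) => (p, h)) (lmul s (tv s θ z))
      (∑ t : Fin d, (z t.succ).natAbs) (fun t => z t.succ) := by
  refine ⟨1, fun p => cw z (qq s p), ?_, ?_, ?_⟩
  · intro p h
    simp [evw_cw]
  · rw [sum_qq s (fun q => (cw z q).length) rfl]
    simp [cw, pw]
  · rw [sum_qq s (fun q => exps (cw z q)) (by simp [cw, exps])]
    simp only [cw, exps_pw]
    exact Finset.univ_sum_single (fun t : Fin d => z t.succ)

theorem sysGood_base : SysGood θ (iota2 (fun (p : ZMod (MM d s)) (h : H) => (p, h)))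
    (baseSys s θ) := by
  refine ⟨good_swp θ _, fun b => ?_⟩
  have h1 : Good θ (fun (p : ZMod (MM d s)) (h : H) => (p, h)) (trn H d s (b.2 0)) 0 0 :=
    good_free _ _ _ (Equiv.addRight _) (fun _ _ => rfl)
  obtain ⟨σ, c, g1, g2, g3⟩ := good_pr θ _ h1 (good_lmul s θ b.2)
  refine ⟨σ, c, g1, g2.trans ?_, by rw [g3, zero_add]⟩
  unfold zB
  rw [Fin.sum_univ_succ]
  omega

theorem exists_blocks (k : ℕ) : ∃ (X : Type) (_ : Fintype X) (ι : X → H → Lv (BY H d s) k) (o : X),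
    (∀ x h x' h', ι x h = ι x' h' → x = x' ∧ h = h') ∧ SysGood θ ι (liftN (baseSys s θ) k) ∧
    (∀ g h, extN _ k (dl H d s g) (ι o h) = ι o (g * h)) ∧
    (∀ g h x, x ≠ o → extN _ k (dl H d s g) (ι x h) = ι x h) := by
  induction k with
  | zero =>
    refine ⟨Bool × ZMod (MM d s), inferInstance, iota2 (fun p h => (p, h)), (true, 0), ?_,
      sysGood_base s θ, ?_, ?_⟩
    · rintro ⟨i, p⟩ h ⟨i', p'⟩ h' e
      simp only [iota2] at e
      have e1 := congrArg Prod.fst e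
      have e2 := congrArg Prod.snd e
      have e3 := congrArg Prod.fst e2
      have e4 := congrArg Prod.snd e2
      simp only at e1 e3 e4
      exact ⟨by rw [e1, e3], e4⟩
    · intro g h
      show dl H d s g (true, 0, h) = (true, 0, g * h)
      simp [dl]
    · rintro g h ⟨i, p⟩ hx
      show dl H d s g (i, p, h) = (i, p, h)
      cases i
      · simp [dl]
      · have : p ≠ 0 := by rintro rfl; exact hx rfl
        simp [dl, this]
  | succ k ih =>
    obtain ⟨X, hX, ι, o, h1, h2, h3, h4⟩ := ih
    refine ⟨Bool × X, inferInstance, iota2 ι, (true, o), ?_, sysGood_lift θ ι _ h2, ?_, ?_⟩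
    · rintro ⟨i, p⟩ h ⟨i', p'⟩ h' e
      have e1 : i = i' := congrArg Prod.fst e
      have e2 := h1 _ _ _ _ (congrArg Prod.snd e)
      simp only at e2
      exact ⟨by rw [e1, e2.1], e2.2⟩
    · intro g h
      show (true, extN _ k (dl H d s g) (ι o h)) = (true, ι o (g * h))
      rw [h3]
    · rintro g h ⟨i, x⟩ hx
      cases i
      · rfl
      · have : x ≠ o := by rintro rfl; exact hx rfl
        show (true, extN _ k (dl H d s g) (ι x h)) = (true, ι x h)
        rw [h4 _ _ _ this]

end goodbase

theorem exps_flatMap {X : Type} (l : List X) (c : X → List (Fin d × Bool)) :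
    exps (l.flatMap c) = (l.map fun x => exps (c x)).sum := by
  induction l with
  | nil => simp [exps]
  | cons x l ih => rw [List.flatMap_cons, exps_append, ih]; simp

theorem evw_flatMap {H : Type} [Group H] (θ : Fin d → H) {X : Type} (l : List X)
    (c : X → List (Fin d × Bool)) (h : ∀ x ∈ l, evw θ (c x) = 1) : evw θ (l.flatMap c) = 1 := by
  induction l with
  | nil => simp [evw_nil]
  | cons x l ih =>
    rw [List.flatMap_cons, evw_append, h x List.mem_cons_self,
      ih fun y hy => h y (List.mem_cons_of_mem _ hy), one_mul]

theorem good_extract {H X Y : Type} [Group H] [Fintype X] (θ : Fin d → H) (ι : X → H → Y) (o : X)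
    (hι : ∀ x h x' h', ι x h = ι x' h' → x = x' ∧ h = h') (π : Equiv.Perm Y) (n : ℕ) (g : H)
    (h3 : ∀ h, π (ι o h) = ι o (g * h)) (h4 : ∀ h x, x ≠ o → π (ι x h) = ι x h)
    (hg : Good θ ι π n 0) : ∃ m ∈ pset θ g, m ≤ n := by
  classical
  obtain ⟨σ, c, c1, c2, c3⟩ := hg
  have ho : evw θ (c o) = g := by
    have := (hι _ _ _ _ ((h3 1).symm.trans (c1 o 1))).2
    simpa using this.symm
  have hx : ∀ x, x ≠ o → evw θ (c x) = 1 := by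
    intro x hx
    have := (hι _ _ _ _ ((h4 1 x hx).symm.trans (c1 x 1))).2
    simpa using this.symm
  refine ⟨_, ⟨c o ++ (Finset.univ.erase o).toList.flatMap c, mk_mem _ ?_, rfl, ?_⟩, ?_⟩
  · rw [exps_append, exps_flatMap, Finset.sum_map_toList,
      Finset.add_sum_erase _ (fun x => exps (c x)) (Finset.mem_univ o), c3]
  · show evw θ _ = g
    rw [evw_append, ho, evw_flatMap, mul_one]
    intro x h
    exact hx x (Finset.ne_of_mem_erase (Finset.mem_toList.1 h))
  · rw [List.length_append, List.length_flatMap, Finset.sum_map_toList,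
      Finset.add_sum_erase _ (fun x => (c x).length) (Finset.mem_univ o)]
    exact c2

section final
variable (Hf : ℕ → Type) [∀ s, Group (Hf s)] (θ : ∀ s, Fin d → Hf s)

theorem good_word (s : ℕ) {X : Type} [Fintype X] (ι : X → Hf s → Lv (BY (Hf s) d s) s)
    (hS : SysGood (θ s) ι (liftN (baseSys s (θ s)) s)) (l : List (WW (SS Hf θ)))
    (hl : ∀ x ∈ l, x ∈ ((sysW (SS Hf θ)).T : Set (WW (SS Hf θ))) ∨
      x⁻¹ ∈ ((sysW (SS Hf θ)).T : Set (WW (SS Hf θ)))) :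
    Good (θ s) ι (prj Hf θ s l.prod) l.length
      (fun t => (prz Hf θ l.prod).toAdd t.succ) := by
  induction l with
  | nil => exact good_one (θ s) ι
  | cons x l ih =>
    have ih := ih (fun y hy => hl y (List.mem_cons_of_mem _ hy))
    have hx : Good (θ s) ι (prj Hf θ s x) 1 (fun t => (prz Hf θ x).toAdd t.succ) := by
      rcases gen_word _ x (hl x List.mem_cons_self) with rfl | ⟨b, rfl, hb⟩
      · obtain ⟨σ, c, g1, g2, g3⟩ := hS.1
        exact ⟨σ, c, g1, by omega, g3⟩
      · obtain ⟨σ, c, g1, g2, g3⟩ := hS.2 b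
        exact ⟨σ, c, g1, by omega, g3⟩
    have := good_mul (θ s) ι hx ih
    rw [List.prod_cons, map_mul, map_mul, List.length_cons, add_comm l.length]
    exact this

theorem lower_bound (s : ℕ) (hθ : Subgroup.closure (Set.range (θ s)) = ⊤) (h : commutator (Hf s)) :
    sInf (pset (θ s) h) ≤
      wordNorm ((sysW (SS Hf θ)).T : Set (WW (SS Hf θ))) (Psi Hf θ s hθ h) := by
  obtain ⟨l, h1, h2, h3⟩ := mem_ball_norm (closure_T (SS Hf θ)) (Psi Hf θ s hθ h)
  obtain ⟨X, hX, ι, o, g1, g2, g3, g4⟩ := exists_blocks s (θ s) s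
  have hg := good_word Hf θ s ι g2 l h1
  rw [h3] at hg
  have e1 : prj Hf θ s (Psi Hf θ s hθ h) = extN _ s (dl (Hf s) d s h) := by
    show (psi0 Hf s h).1 s = _
    simp [psi0]
  have e2 : prz Hf θ (Psi Hf θ s hθ h) = 1 := rfl
  rw [e1, e2] at hg
  obtain ⟨m, hm, hmn⟩ := good_extract (θ s) ι o g1 _ _ (h : Hf s) (g3 _) (g4 _) hg
  exact (Nat.sInf_le hm).trans (hmn.trans h2)

end final
end lower

/-- Proposition (imbedding a sequence of derived subgroups in groups of
subexponential growth, with uniformly controlled distortion): there are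
assignments of constants `K, L` — depending only on `s`, on `S ∩ [0, s)` and on
the groups `H j` for `j ∈ S`, `j < s`, but not on `H j` for `j ≥ s` — such
that for every sequence `(H i)` of `d`-generated finite groups and every
`S ⊆ ℕ` there is a finitely generated group `W_S` of subexponential growth
admitting, for each `s ∈ S`, an injective homomorphism
`Ψ_s : [H_s, H_s] → W_S` which is `(K, L)`-bi-Lipschitz from the perfect
metric on `[H_s, H_s]` to the word metric on `W_S`. -/
theorem imbed_derived_subgroups_in_subexp_group (d : ℕ) :
    ∃ K L : Set ℕ → (ℕ → MarkedGroup d) → ℕ → ℝ,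
      -- the constants depend only on `s`, `S ∩ [0, s)` and the groups `H j`,
      -- `j ∈ S`, `j < s`:
      (∀ (S S' : Set ℕ) (Hs Hs' : ℕ → MarkedGroup d) (s : ℕ),
        (∀ j < s, j ∈ S ↔ j ∈ S') → (∀ j < s, j ∈ S → Hs j = Hs' j) →
        K S Hs s = K S' Hs' s ∧ L S Hs s = L S' Hs' s) ∧
      ∀ (Hs : ℕ → MarkedGroup d) (S : Set ℕ),
        ∃ (W : Type) (_ : Group W) (T : Finset W),
          Subgroup.closure (T : Set W) = ⊤ ∧
          SubexpGrowth (T : Set W) ∧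
          ∀ s ∈ S, 1 ≤ K S Hs s ∧ 1 ≤ L S Hs s ∧
            ∃ Ψ : commutator (Hs s).carrier →* W, Function.Injective Ψ ∧
              ∀ h h' : commutator (Hs s).carrier,
                (perfectDist ((Hs s).gens : Set (Hs s).carrier)
                    (h : (Hs s).carrier) (h' : (Hs s).carrier) : ℝ) / K S Hs s ≤
                    (wordDist (T : Set W) (Ψ h) (Ψ h') : ℝ) ∧
                (wordDist (T : Set W) (Ψ h) (Ψ h') : ℝ) ≤
                    L S Hs s * (perfectDist ((Hs s).gens : Set (Hs s).carrier)
                      (h : (Hs s).carrier) (h' : (Hs s).carrier) : ℝ) := by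
  refine ⟨fun _ _ _ => 1, fun _ _ s => (CC d s : ℝ), fun _ _ _ _ _ _ _ => ⟨rfl, rfl⟩, ?_⟩
  intro Hs S
  let Hf : ℕ → Type := fun s => (Hs s).carrier
  let θe : ∀ s, Fin d ≃ ((Hs s).gens : Set (Hs s).carrier) := fun s =>
    ((Hs s).gens.equivFinOfCardEq (Hs s).card_gens).symm
  let θ : ∀ s, Fin d → Hf s := fun s t => (θe s t : (Hs s).carrier)
  have hθ : ∀ s, Subgroup.closure (Set.range (θ s)) = ⊤ := by
    intro s
    rw [← (Hs s).isGen]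
    congr 1
    ext x
    constructor
    · rintro ⟨t, rfl⟩
      exact (θe s t).2
    · intro hx
      exact ⟨(θe s).symm ⟨x, hx⟩, by simp [θ]⟩
  have hfin : ∀ s, Finite (Hf s) := fun s => (inferInstance : Finite (Hs s).carrier)
  refine ⟨WW (SS Hf θ), inferInstance, (sysW (SS Hf θ)).T, closure_T _, subexp _, ?_⟩
  intro s _
  refine ⟨le_rfl, ?_, Psi Hf θ s (hθ s), Psi_inj Hf θ s (hθ s), ?_⟩
  · have : 1 ≤ CC d s := by unfold CC; omega
    show (1 : ℝ) ≤ (CC d s : ℝ)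
    exact_mod_cast this
  intro h h'
  have e : perfectDist ((Hs s).gens : Set (Hs s).carrier) (h : (Hs s).carrier)
      (h' : (Hs s).carrier) = sInf (pset (θ s) ((h * h'⁻¹ : commutator (Hf s)) : Hf s)) :=
    perfectNorm_eq _ (θe s) _
  have e' : wordDist ((sysW (SS Hf θ)).T : Set (WW (SS Hf θ))) (Psi Hf θ s (hθ s) h)
      (Psi Hf θ s (hθ s) h') = wordNorm ((sysW (SS Hf θ)).T : Set (WW (SS Hf θ)))
      (Psi Hf θ s (hθ s) (h * h'⁻¹)) := by
    rw [map_mul, map_inv]; rfl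
  have hl := lower_bound Hf θ s (hθ s) (h * h'⁻¹)
  have hu := upper_bound Hf θ s (hθ s) (h * h'⁻¹)
  rw [div_one, e, e']
  refine ⟨by exact_mod_cast hl, ?_⟩
  show _ ≤ (CC d s : ℝ) * _
  exact_mod_cast hu
end
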